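/- arXiv:2107.05299 — 2 statements merged into one kernel-verified Lean document; each statement's English description precedes it below -/
import Mathlib

section
/- Let κ > 0, let W = (φ₀, φ₀/√κ) with φ₀(x) = √κ(1+|x|²/24)⁻² be the explicit ground state, and set C_GN = 2/(3·H(W)^{1/2}). Let δ' ∈ (0,1), let C > 0, and let u, v : ℝ⁶ → ℂ be Schwartz functions satisfying R(u,v) ≤ C_GN·H(u,v)^{3/2}, |R(u,v)| ≤ C·H(u,v)^{3/2}, and H(u,v) ≤ (1 − δ')·H(W). Then the energy is trapped by the kinetic energy: (1/3)(1 + δ'')·H(u,v) ≤ E(u,v) ≤ (1 + C·((1−δ')H(W))^{1/2})·H(u,v), where δ'' = 2(1 − (1−δ')^{1/2}). -/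
open MeasureTheory Real Filter

noncomputable section

/-- Six-dimensional Euclidean space. -/
abbrev E6 := EuclideanSpace ℝ (Fin 6)

/-- Partial derivative of a complex-valued function in the `j`-th coordinate direction. -/
def pd (f : E6 → ℂ) (j : Fin 6) (x : E6) : ℂ := fderiv ℝ f x (EuclideanSpace.single j 1)

/-- Laplacian of a complex-valued function on `ℝ⁶`. -/
def lap (f : E6 → ℂ) (x : E6) : ℂ :=
  ∑ j : Fin 6, fderiv ℝ (fun y => pd f j y) x (EuclideanSpace.single j 1)

/-- Partial derivative of a real-valued function in the `j`-th coordinate direction. -/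
def pdR (f : E6 → ℝ) (j : Fin 6) (x : E6) : ℝ := fderiv ℝ f x (EuclideanSpace.single j 1)

/-- Laplacian of a real-valued function on `ℝ⁶`. -/
def lapR (f : E6 → ℝ) (x : E6) : ℝ :=
  ∑ j : Fin 6, fderiv ℝ (fun y => pdR f j y) x (EuclideanSpace.single j 1)

/-- `|∇f(x)|²`, the squared length of the gradient. -/
def gradNormSq (f : E6 → ℂ) (x : E6) : ℝ := ∑ j : Fin 6, ‖pd f j x‖ ^ 2

/-- Kinetic energy `H(u,v) = ∫|∇u|² + (κ/2)∫|∇v|²`. -/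
def Hen (κ : ℝ) (u v : E6 → ℂ) : ℝ :=
  (∫ x : E6, gradNormSq u x) + (κ / 2) * ∫ x : E6, gradNormSq v x

/-- Potential energy `R(u,v) = Re ∫ conj(v) u²`. -/
def Ren (u v : E6 → ℂ) : ℝ := (∫ x : E6, (starRingEnd ℂ) (v x) * (u x) ^ 2).re

/-- Energy `E(u,v) = H(u,v) − R(u,v)`. -/
def Een (κ : ℝ) (u v : E6 → ℂ) : ℝ := Hen κ u v - Ren u v

/-- Mass `M(u,v) = ∫|u|² + ∫|v|²`. -/
def Mass (u v : E6 → ℂ) : ℝ := (∫ x : E6, ‖u x‖ ^ 2) + ∫ x : E6, ‖v x‖ ^ 2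

/-- `j`-th component of the momentum `P(u,v) = Im ∫ (conj(u)∇u + (1/2)conj(v)∇v)`. -/
def Pmom (u v : E6 → ℂ) (j : Fin 6) : ℝ :=
  (∫ x : E6, (starRingEnd ℂ) (u x) * pd u j x
    + (1 / 2 : ℂ) * (starRingEnd ℂ) (v x) * pd v j x).im

/-- The explicit profile `φ₀(x) = √κ (1 + |x|²/24)⁻²`. -/
def phi0 (κ : ℝ) (x : E6) : ℝ := Real.sqrt κ * ((1 + ‖x‖ ^ 2 / 24) ^ 2)⁻¹

/-- First component of the ground state `W`. -/
def W1 (κ : ℝ) (x : E6) : ℂ := (phi0 κ x : ℂ)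

/-- Second component of the ground state `W`, namely `φ₀/√κ`. -/
def W2 (κ : ℝ) (x : E6) : ℂ := ((phi0 κ x / Real.sqrt κ : ℝ) : ℂ)

/-- A function is Schwartz: smooth with all seminorms `sup ‖x‖^k ‖D^n f‖` finite. -/
def IsSchwartz (f : E6 → ℂ) : Prop :=
  ContDiff ℝ (⊤ : ℕ∞) f ∧ ∀ k n : ℕ, ∃ C : ℝ, ∀ x : E6, ‖x‖ ^ k * ‖iteratedFDeriv ℝ n f x‖ ≤ C

/-- A classical solution of the quadratic NLS system
`i∂ₜu + Δu + v conj(u) = 0`, `i∂ₜv + κΔv + u² = 0` on a time set `I`,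
with Schwartz slices whose seminorms are bounded locally uniformly in `t`. -/
structure IsClassicalSol (κ : ℝ) (I : Set ℝ) (u v : ℝ → E6 → ℂ) : Prop where
  smooth : ContDiffOn ℝ (⊤ : ℕ∞) (fun p : ℝ × E6 => (u p.1 p.2, v p.1 p.2)) (I ×ˢ Set.univ)
  eqn_u : ∀ t ∈ I, ∀ x : E6,
    Complex.I * deriv (fun s => u s x) t + lap (u t) x
      + v t x * (starRingEnd ℂ) (u t x) = 0
  eqn_v : ∀ t ∈ I, ∀ x : E6,
    Complex.I * deriv (fun s => v s x) t + (κ : ℂ) * lap (v t) x + (u t x) ^ 2 = 0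
  schwartz_u : ∀ t ∈ I, IsSchwartz (u t)
  schwartz_v : ∀ t ∈ I, IsSchwartz (v t)
  bounds : ∀ K : Set ℝ, K ⊆ I → IsCompact K → ∀ k n : ℕ, ∃ C : ℝ, ∀ t ∈ K, ∀ x : E6,
    ‖x‖ ^ k * ‖iteratedFDeriv ℝ n (u t) x‖ ≤ C ∧ ‖x‖ ^ k * ‖iteratedFDeriv ℝ n (v t) x‖ ≤ C

/-- energy trapping. If `u, v` are Schwartz satisfying the sharp
Gagliardo–Nirenberg bound `R(u,v) ≤ C_GN H(u,v)^{3/2}` with `C_GN = 2/(3 H(W)^{1/2})`,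
the bound `|R(u,v)| ≤ C H(u,v)^{3/2}`, and `H(u,v) ≤ (1 − δ') H(W)`, then
`(1/3)(1 + δ'') H(u,v) ≤ E(u,v) ≤ (1 + C ((1 − δ') H(W))^{1/2}) H(u,v)`,
where `δ'' = 2(1 − (1 − δ')^{1/2})`. -/
theorem energy_trapping (κ : ℝ) (hκ : 0 < κ) (δ' : ℝ) (hδ'0 : 0 < δ') (hδ'1 : δ' < 1)
    (C : ℝ) (hC : 0 < C)
    (u v : E6 → ℂ) (hu : IsSchwartz u) (hv : IsSchwartz v)
    (hGN : Ren u v ≤ (2 / (3 * Real.sqrt (Hen κ (W1 κ) (W2 κ)))) * (Hen κ u v) ^ (3 / 2 : ℝ))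
    (habs : |Ren u v| ≤ C * (Hen κ u v) ^ (3 / 2 : ℝ))
    (hH : Hen κ u v ≤ (1 - δ') * Hen κ (W1 κ) (W2 κ)) :
    (1 / 3) * (1 + 2 * (1 - Real.sqrt (1 - δ'))) * Hen κ u v ≤ Een κ u v ∧
    Een κ u v ≤ (1 + C * Real.sqrt ((1 - δ') * Hen κ (W1 κ) (W2 κ))) * Hen κ u v := by
  have hnn : ∀ f g : E6 → ℂ, 0 ≤ Hen κ f g := by
    intro f g
    have h1 : ∀ f : E6 → ℂ, 0 ≤ ∫ x : E6, gradNormSq f x := fun f =>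
      integral_nonneg fun x => Finset.sum_nonneg fun j _ => by positivity
    have h2 := h1 f
    have h3 := h1 g
    unfold Hen
    positivity
  have hh := hnn u v
  have hw := hnn (W1 κ) (W2 κ)
  unfold Een
  generalize Hen κ u v = h at *
  generalize Hen κ (W1 κ) (W2 κ) = w at *
  generalize Ren u v = R at *
  have hp : h ^ (3 / 2 : ℝ) = h * √h := by
    rw [show (3 / 2 : ℝ) = 1 + 1 / 2 by norm_num,
      Real.rpow_add_of_nonneg hh (by norm_num) (by norm_num), Real.rpow_one, Real.sqrt_eq_rpow]
  rw [hp] at hGN habs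
  have hs : √h ≤ √((1 - δ') * w) := Real.sqrt_le_sqrt hH
  constructor
  · rcases hw.eq_or_lt with hw0 | hw0
    · have h0 : h = 0 := by
        rw [← hw0] at hH
        linarith
      subst h0
      simp at hGN
      linarith
    · have hsw : 0 < √w := Real.sqrt_pos.mpr hw0
      rw [Real.sqrt_mul (by linarith)] at hs
      have key : 2 / (3 * √w) * (h * √h) ≤ 2 / (3 * √w) * (h * (√(1 - δ') * √w)) := by
        gcongr
      have e : 2 / (3 * √w) * (h * (√(1 - δ') * √w)) = 2 / 3 * √(1 - δ') * h := by
        field_simp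
      rw [e] at key
      linarith
  · have h1 : C * (h * √h) ≤ C * (h * √((1 - δ') * w)) := by gcongr
    have h2 := neg_abs_le R
    linarith
end
end

section
/- Let κ = 1/2 and let W = (φ₀, φ₀/√κ) with φ₀(x) = √κ(1+|x|²/24)⁻² be the explicit ground state. Assume the sharp Gagliardo–Nirenberg inequality R(u,v) ≤ (2/(3·H(W)^{1/2}))·H(u,v)^{3/2} holds for all pairs of Schwartz functions u, v : ℝ⁶ → ℂ. Then there is no classical solution (u, v) of the quadratic NLS system with κ = 1/2 defined on all of [0, ∞) whose initial data (u₀, v₀) = (u(0,·), v(0,·)) satisfies E(u₀, v₀) < E(W) and H(u₀, v₀) > H(W); i.e., every such classical solution blows up in finite time. -/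
open MeasureTheory Real Filter

noncomputable section

def Nice (F : ℝ → E6 → ℂ) : Prop :=
  (∀ t, 0 ≤ t → ContDiff ℝ (⊤ : ℕ∞) (F t)) ∧
  ∀ (T : ℝ) (k n : ℕ), ∃ C : ℝ, ∀ t, 0 ≤ t → t ≤ T → ∀ x : E6,
    ‖x‖ ^ k * ‖iteratedFDeriv ℝ n (F t) x‖ ≤ C

def Temp (F : ℝ → E6 → ℂ) : Prop :=
  (∀ t, 0 ≤ t → ContDiff ℝ (⊤ : ℕ∞) (F t)) ∧
  ∀ (T : ℝ) (n : ℕ), ∃ (k : ℕ) (C : ℝ), ∀ t, 0 ≤ t → t ≤ T → ∀ x : E6,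
    ‖iteratedFDeriv ℝ n (F t) x‖ ≤ C * (1 + ‖x‖) ^ k

lemma Nice.temp {F : ℝ → E6 → ℂ} (hF : Nice F) : Temp F := by
  refine ⟨hF.1, fun T n => ?_⟩
  obtain ⟨C, hC⟩ := hF.2 T 0 n
  exact ⟨0, C, fun t h0 hT x => by simpa using hC t h0 hT x⟩

lemma Nice.bd' {F : ℝ → E6 → ℂ} (hF : Nice F) (T : ℝ) (k m n : ℕ) :
    ∃ C : ℝ, ∀ t, 0 ≤ t → t ≤ T → ∀ x : E6,
      ‖x‖ ^ k * (1 + ‖x‖) ^ m * ‖iteratedFDeriv ℝ n (F t) x‖ ≤ C := by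
  obtain ⟨C1, h1⟩ := hF.2 T k n
  obtain ⟨C2, h2⟩ := hF.2 T (k + m) n
  refine ⟨2 ^ (m - 1) * (C1 + C2), fun t h0 hT x => ?_⟩
  have hp := add_pow_le (zero_le_one) (norm_nonneg x) m
  have e1 := h1 t h0 hT x
  have e2 := h2 t h0 hT x
  set D := ‖iteratedFDeriv ℝ n (F t) x‖
  have hD : 0 ≤ D := norm_nonneg _
  calc ‖x‖ ^ k * (1 + ‖x‖) ^ m * D ≤ ‖x‖ ^ k * (2 ^ (m - 1) * (1 ^ m + ‖x‖ ^ m)) * D := by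
        gcongr
    _ = 2 ^ (m - 1) * (‖x‖ ^ k * D + ‖x‖ ^ (k + m) * D) := by rw [pow_add]; ring
    _ ≤ _ := by gcongr

lemma Nice.tmul {F G : ℝ → E6 → ℂ} (hF : Temp F) (hG : Nice G) :
    Nice (fun t x => F t x * G t x) := by
  refine ⟨fun t ht => (hF.1 t ht).mul (hG.1 t ht), fun T k n => ?_⟩
  have key : ∀ i : ℕ, ∃ C : ℝ, ∀ t, 0 ≤ t → t ≤ T → ∀ x : E6,
      ‖x‖ ^ k * (‖iteratedFDeriv ℝ i (F t) x‖ * ‖iteratedFDeriv ℝ (n - i) (G t) x‖) ≤ C := by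
    intro i
    obtain ⟨m, C, hC⟩ := hF.2 T i
    obtain ⟨C', hC'⟩ := hG.bd' T k m (n - i)
    refine ⟨|C| * C', fun t h0 hT x => ?_⟩
    have e1 := hC t h0 hT x
    have e2 := hC' t h0 hT x
    have e3 : ‖iteratedFDeriv ℝ i (F t) x‖ ≤ |C| * (1 + ‖x‖) ^ m :=
      e1.trans (by gcongr; exact le_abs_self C)
    calc _ ≤ ‖x‖ ^ k * ((|C| * (1 + ‖x‖) ^ m) * ‖iteratedFDeriv ℝ (n - i) (G t) x‖) := by gcongr
      _ = |C| * (‖x‖ ^ k * (1 + ‖x‖) ^ m * ‖iteratedFDeriv ℝ (n - i) (G t) x‖) := by ring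
      _ ≤ _ := by gcongr
  choose C hC using key
  refine ⟨∑ i ∈ Finset.range (n + 1), (n.choose i : ℝ) * C i, fun t h0 hT x => ?_⟩
  have h := norm_iteratedFDeriv_mul_le (hF.1 t h0) (hG.1 t h0) x (n := n)
    (by exact_mod_cast le_top)
  calc _ ≤ ‖x‖ ^ k * _ := mul_le_mul_of_nonneg_left h (by positivity)
    _ = ∑ i ∈ Finset.range (n + 1), (n.choose i : ℝ) *
        (‖x‖ ^ k * (‖iteratedFDeriv ℝ i (F t) x‖ * ‖iteratedFDeriv ℝ (n - i) (G t) x‖)) := by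
      rw [Finset.mul_sum]; exact Finset.sum_congr rfl fun i _ => by ring
    _ ≤ _ := Finset.sum_le_sum fun i _ => mul_le_mul_of_nonneg_left (hC i t h0 hT x) (by positivity)

lemma Nice.mul {F G : ℝ → E6 → ℂ} (hF : Nice F) (hG : Nice G) :
    Nice (fun t x => F t x * G t x) := Nice.tmul hF.temp hG

lemma Temp.of {h : E6 → ℂ} (hh : h.HasTemperateGrowth) : Temp (fun _ => h) := by
  refine ⟨fun t _ => hh.1, fun T n => ?_⟩
  obtain ⟨k, C, hC⟩ := hh.2 n
  exact ⟨k, C, fun _ _ _ x => hC x⟩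

/-- coordinate as complex function -/
def cx (j : Fin 6) (x : E6) : ℂ := ((x j : ℝ) : ℂ)

def cxL (j : Fin 6) : E6 →L[ℝ] ℂ := Complex.ofRealCLM.comp (EuclideanSpace.proj j)

lemma cx_eq (j : Fin 6) : cx j = cxL j := by ext x; simp [cx, cxL]

lemma Nice.cmul {G : ℝ → E6 → ℂ} (j : Fin 6) (hG : Nice G) :
    Nice (fun t x => cx j x * G t x) := by
  refine Nice.tmul (F := fun _ => cx j) (Temp.of ?_) hG
  rw [cx_eq]; exact (cxL j).hasTemperateGrowth

lemma Nice.const_mul {G : ℝ → E6 → ℂ} (c : ℂ) (hG : Nice G) :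
    Nice (fun t x => c * G t x) := by
  refine Nice.tmul (F := fun _ _ => c) (Temp.of ?_) hG
  exact Function.HasTemperateGrowth.const c

lemma Nice.add {F G : ℝ → E6 → ℂ} (hF : Nice F) (hG : Nice G) :
    Nice (fun t x => F t x + G t x) := by
  refine ⟨fun t ht => (hF.1 t ht).add (hG.1 t ht), fun T k n => ?_⟩
  obtain ⟨C1, h1⟩ := hF.2 T k n
  obtain ⟨C2, h2⟩ := hG.2 T k n
  refine ⟨C1 + C2, fun t h0 hT x => ?_⟩
  have e : iteratedFDeriv ℝ n (fun x => F t x + G t x) x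
      = iteratedFDeriv ℝ n (F t) x + iteratedFDeriv ℝ n (G t) x :=
    iteratedFDeriv_add_apply (((hF.1 t h0).of_le (by exact_mod_cast le_top)).contDiffAt)
      (((hG.1 t h0).of_le (by exact_mod_cast le_top)).contDiffAt)
  rw [e]
  calc _ ≤ ‖x‖ ^ k * (‖iteratedFDeriv ℝ n (F t) x‖ + ‖iteratedFDeriv ℝ n (G t) x‖) := by
        gcongr; exact norm_add_le _ _
    _ ≤ _ := by rw [mul_add]; exact add_le_add (h1 t h0 hT x) (h2 t h0 hT x)

lemma Nice.neg {F : ℝ → E6 → ℂ} (hF : Nice F) : Nice (fun t x => - F t x) := by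
  simpa using hF.const_mul (-1)

lemma Nice.sub {F G : ℝ → E6 → ℂ} (hF : Nice F) (hG : Nice G) :
    Nice (fun t x => F t x - G t x) := by
  simpa [sub_eq_add_neg] using hF.add hG.neg

lemma Nice.zero : Nice (fun _ _ => 0) := by
  refine ⟨fun t _ => contDiff_const, fun T k n => ⟨0, fun t _ _ x => ?_⟩⟩
  simp

lemma Nice.sum {ι : Type*} (s : Finset ι) {F : ι → ℝ → E6 → ℂ} (hF : ∀ i, Nice (F i)) :
    Nice (fun t x => ∑ i ∈ s, F i t x) := by
  classical
  induction s using Finset.induction_on with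
  | empty => simpa using Nice.zero
  | insert a s ha ih => simpa [Finset.sum_insert ha] using (hF a).add ih

lemma Nice.conj {F : ℝ → E6 → ℂ} (hF : Nice F) :
    Nice (fun t x => (starRingEnd ℂ) (F t x)) := by
  refine ⟨fun t ht => Complex.conjCLE.contDiff.comp (hF.1 t ht), fun T k n => ?_⟩
  obtain ⟨C, h⟩ := hF.2 T k n
  refine ⟨C, fun t h0 hT x => ?_⟩
  have := LinearIsometryEquiv.norm_iteratedFDeriv_comp_left Complex.conjLIE (F t) x n
  have e : (fun x => (starRingEnd ℂ) (F t x)) = Complex.conjLIE ∘ F t := by ext; simp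
  change ‖x‖ ^ k * ‖iteratedFDeriv ℝ n (fun x => (starRingEnd ℂ) (F t x)) x‖ ≤ C
  rw [e, this]; exact h t h0 hT x

lemma Nice.pd {F : ℝ → E6 → ℂ} (hF : Nice F) (j : Fin 6) :
    Nice (fun t x => pd (F t) j x) := by
  have sm : ∀ t, 0 ≤ t → ContDiff ℝ (⊤ : ℕ∞) (fderiv ℝ (F t)) := fun t ht =>
    (hF.1 t ht).fderiv_right (by simp)
  refine ⟨fun t ht => (sm t ht).clm_apply contDiff_const, fun T k n => ?_⟩
  obtain ⟨C, h⟩ := hF.2 T k (n + 1)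
  refine ⟨C, fun t h0 hT x => le_trans ?_ (h t h0 hT x)⟩
  gcongr
  have h1 := norm_iteratedFDeriv_clm_apply_const (𝕜 := ℝ) (c := EuclideanSpace.single j (1 : ℝ))
    (n := n) (x := x) ((sm t h0).contDiffAt) (by exact_mod_cast le_top)
  refine h1.trans ?_
  rw [norm_iteratedFDeriv_fderiv]
  simp

lemma Nice.bound {F : ℝ → E6 → ℂ} (hF : Nice F) (T : ℝ) :
    ∃ C : ℝ, ∀ t, 0 ≤ t → t ≤ T → ∀ x : E6, ‖F t x‖ ≤ C * (1 + ‖x‖) ^ (-(7 : ℝ)) := by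
  obtain ⟨C, h⟩ := hF.bd' T 0 7 0
  refine ⟨C, fun t h0 hT x => ?_⟩
  have e := h t h0 hT x
  simp only [pow_zero, one_mul, norm_iteratedFDeriv_zero] at e
  have hp : (0 : ℝ) < 1 + ‖x‖ := by positivity
  rw [Real.rpow_neg hp.le, ← div_eq_mul_inv, le_div_iff₀ (by positivity)]
  have : (1 + ‖x‖) ^ (7 : ℝ) = (1 + ‖x‖) ^ (7 : ℕ) := by
    rw [← Real.rpow_natCast]; norm_num
  rw [this]; linarith

lemma int_bd (C : ℝ) : Integrable (fun x : E6 => C * (1 + ‖x‖) ^ (-(7 : ℝ))) := by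
  apply Integrable.const_mul
  apply integrable_one_add_norm
  simp; norm_num

lemma Nice.cont {F : ℝ → E6 → ℂ} (hF : Nice F) {t : ℝ} (ht : 0 ≤ t) : Continuous (F t) :=
  (hF.1 t ht).continuous

lemma Nice.diff {F : ℝ → E6 → ℂ} (hF : Nice F) {t : ℝ} (ht : 0 ≤ t) : Differentiable ℝ (F t) :=
  (hF.1 t ht).differentiable (by simp)

lemma Nice.int {F : ℝ → E6 → ℂ} (hF : Nice F) {t : ℝ} (ht : 0 ≤ t) :
    Integrable (F t) := by
  obtain ⟨C, hC⟩ := hF.bound t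
  exact (int_bd C).mono' (hF.cont ht).aestronglyMeasurable
    (Eventually.of_forall fun x => hC t ht le_rfl x)

lemma Nice.hasDerivAt {F F' : ℝ → E6 → ℂ} (hF : Nice F) (hF' : Nice F')
    (hd : ∀ t, 0 < t → ∀ x, HasDerivAt (fun s => F s x) (F' t x) t) {t : ℝ} (ht : 0 < t) :
    HasDerivAt (fun s => ∫ x, F s x) (∫ x, F' t x) t := by
  obtain ⟨C, hC⟩ := hF'.bound (t + 1)
  refine (hasDerivAt_integral_of_dominated_loc_of_deriv_le (s := Set.Ioo 0 (t + 1))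
    (Ioo_mem_nhds ht (by linarith)) ?_ (hF.int ht.le) (hF'.cont ht.le).aestronglyMeasurable
    (bound := fun x => C * (1 + ‖x‖) ^ (-(7 : ℝ))) ?_ (int_bd C) ?_).2
  · filter_upwards [Ioi_mem_nhds ht] with s hs
    exact (hF.cont (le_of_lt hs)).aestronglyMeasurable
  · exact Eventually.of_forall fun x s hs => hC s hs.1.le hs.2.le x
  · exact Eventually.of_forall fun x s hs => hd s hs.1 x

lemma Nice.continuousOn {F : ℝ → E6 → ℂ} (hF : Nice F)
    (hc : ∀ x, ContinuousOn (fun s => F s x) (Set.Ici 0)) :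
    ContinuousOn (fun s => ∫ x, F s x) (Set.Ici 0) := by
  intro t ht
  have ht' : (0 : ℝ) ≤ t := ht
  obtain ⟨C, hC⟩ := hF.bound (t + 1)
  refine continuousWithinAt_of_dominated (bound := fun x => C * (1 + ‖x‖) ^ (-(7 : ℝ))) ?_ ?_
    (int_bd C) ?_
  · filter_upwards [self_mem_nhdsWithin] with s hs
    exact (hF.cont hs).aestronglyMeasurable
  · filter_upwards [self_mem_nhdsWithin,
      mem_nhdsWithin_of_mem_nhds (Iio_mem_nhds (show t < t + 1 by linarith))] with s hs hs'
    exact Eventually.of_forall fun x => hC s hs (le_of_lt hs') x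
  · exact Eventually.of_forall fun x => hc x t ht

lemma Nice.int_pd {F : ℝ → E6 → ℂ} (hF : Nice F) {t : ℝ} (ht : 0 ≤ t) (j : Fin 6) :
    ∫ x, _root_.pd (F t) j x = 0 := by
  have h := integral_mul_fderiv_eq_neg_fderiv_mul_of_integrable (μ := (volume : Measure E6))
    (f := fun _ : E6 => (1 : ℂ)) (g := F t) (v := EuclideanSpace.single j (1 : ℝ))
    (by simp) (by simpa [_root_.pd] using (hF.pd j).int ht) (by simpa using hF.int ht)
    (fun x _ => by fun_prop) (fun x _ => hF.diff ht x)
  simpa [_root_.pd] using h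


def JS (F : ℝ → E6 → ℂ) : Prop :=
  ContDiffOn ℝ (⊤ : ℕ∞) (fun p : ℝ × E6 => F p.1 p.2) (Set.Ici 0 ×ˢ Set.univ)

lemma two_le_top : (2 : WithTop ℕ∞) ≤ ((⊤ : ℕ∞) : WithTop ℕ∞) := by
  have : ((2 : ℕ∞) : WithTop ℕ∞) ≤ ((⊤ : ℕ∞) : WithTop ℕ∞) := WithTop.coe_le_coe.2 le_top
  exact this

lemma oneone_le_top : (1 + 1 : WithTop ℕ∞) ≤ ((⊤ : ℕ∞) : WithTop ℕ∞) := by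
  rw [one_add_one_eq_two]; exact two_le_top

lemma uds : UniqueDiffOn ℝ ((Set.Ici (0 : ℝ)) ×ˢ (Set.univ : Set E6)) :=
  (uniqueDiffOn_Ici 0).prod uniqueDiffOn_univ

lemma hasFDerivAt_slice (t : ℝ) (x : E6) :
    HasFDerivAt (fun y : E6 => ((t, y) : ℝ × E6)) (ContinuousLinearMap.inr ℝ ℝ E6) x :=
  hasFDerivAt_prodMk_right t x

lemma hasDerivAt_slice (t : ℝ) (x : E6) :
    HasDerivAt (fun s : ℝ => ((s, x) : ℝ × E6)) (1, 0) t :=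
  (hasDerivAt_id t).prodMk (hasDerivAt_const t x)

lemma JS.pd_eq {F : ℝ → E6 → ℂ} (hF : JS F) (j : Fin 6) {t : ℝ} (ht : 0 ≤ t) (x : E6) :
    pd (F t) j x = fderivWithin ℝ (fun p : ℝ × E6 => F p.1 p.2)
      (Set.Ici 0 ×ˢ Set.univ) (t, x) (0, EuclideanSpace.single j 1) := by
  have h1 := (hF.differentiableOn (by simp) (t, x) ⟨ht, trivial⟩).hasFDerivWithinAt
  have h2 := (hasFDerivAt_slice t x).hasFDerivWithinAt (s := Set.univ)
  have h3 := h1.comp x h2 (fun y _ => ⟨ht, trivial⟩)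
  rw [hasFDerivWithinAt_univ] at h3
  have h4 : HasFDerivAt (F t) _ x := h3
  rw [pd, h4.fderiv]; simp

lemma JS.pd {F : ℝ → E6 → ℂ} (hF : JS F) (j : Fin 6) : JS (fun t x => pd (F t) j x) := by
  have h := (hF.fderivWithin uds (m := (⊤ : ℕ∞)) (by simp)).clm_apply
    (contDiffOn_const (c := ((0, EuclideanSpace.single j 1) : ℝ × E6)))
  refine h.congr fun p hp => ?_
  exact hF.pd_eq j hp.1 p.2

lemma JS.cont {F : ℝ → E6 → ℂ} (hF : JS F) (x : E6) :
    ContinuousOn (fun s => F s x) (Set.Ici 0) := by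
  have h := hF.continuousOn
  exact h.comp (f := fun s : ℝ => (s, x)) (by fun_prop) (fun s hs => ⟨hs, trivial⟩)

lemma JS.at {F : ℝ → E6 → ℂ} (hF : JS F) {t : ℝ} (ht : 0 < t) (x : E6) :
    ContDiffAt ℝ (⊤ : ℕ∞) (fun p : ℝ × E6 => F p.1 p.2) (t, x) :=
  ContDiffOn.contDiffAt hF (prod_mem_nhds (Ici_mem_nhds ht) univ_mem)

lemma JS.hasDerivAt' {F : ℝ → E6 → ℂ} (hF : JS F) {t : ℝ} (ht : 0 < t) (x : E6) :
    HasDerivAt (fun s => F s x) (fderiv ℝ (fun p : ℝ × E6 => F p.1 p.2) (t, x) (1, 0)) t := by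
  have h : HasFDerivAt (fun p : ℝ × E6 => F p.1 p.2) _ (t, x) :=
    ((hF.at ht x).differentiableAt (by simp)).hasFDerivAt
  exact h.comp_hasDerivAt t (hasDerivAt_slice t x)

lemma JS.hasDerivAt {F : ℝ → E6 → ℂ} (hF : JS F) {t : ℝ} (ht : 0 < t) (x : E6) :
    HasDerivAt (fun s => F s x) (deriv (fun s => F s x) t) t :=
  (hF.hasDerivAt' ht x).differentiableAt.hasDerivAt

lemma JS.comm {F : ℝ → E6 → ℂ} (hF : JS F) {t : ℝ} (ht : 0 < t) (j : Fin 6) (x : E6) :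
    HasDerivAt (fun s => _root_.pd (F s) j x)
      (_root_.pd (fun y => deriv (fun s => F s y) t) j x) t := by
  set U := fun p : ℝ × E6 => F p.1 p.2 with hU
  have hc := hF.at ht x
  have hs : IsSymmSndFDerivAt ℝ U (t, x) := hc.isSymmSndFDerivAt (by simpa using two_le_top)
  have hd : HasFDerivAt (fderiv ℝ U) (fderiv ℝ (fderiv ℝ U) (t, x)) (t, x) :=
    ((hc.fderiv_right (m := 1) oneone_le_top).differentiableAt (by simp)).hasFDerivAt
  have e1 : (fun y => deriv (fun s => F s y) t) = fun y => fderiv ℝ U (t, y) (1, 0) := by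
    ext y; exact (hF.hasDerivAt' ht y).deriv
  have h1 : HasFDerivAt (fun y => fderiv ℝ U (t, y) (1, 0))
      ((ContinuousLinearMap.apply ℝ ℂ ((1, 0) : ℝ × E6)).comp
        ((fderiv ℝ (fderiv ℝ U) (t, x)).comp (ContinuousLinearMap.inr ℝ ℝ E6))) x :=
    (ContinuousLinearMap.apply ℝ ℂ ((1, 0) : ℝ × E6)).hasFDerivAt.comp x
      (hd.comp x (hasFDerivAt_slice t x))
  have h2 : HasDerivAt (fun s => fderiv ℝ U (s, x) (0, EuclideanSpace.single j 1))
      (fderiv ℝ (fderiv ℝ U) (t, x) (1, 0) (0, EuclideanSpace.single j 1)) t :=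
    (ContinuousLinearMap.apply ℝ ℂ ((0, EuclideanSpace.single j 1) : ℝ × E6)).hasFDerivAt.comp_hasDerivAt t
      (hd.comp_hasDerivAt t (hasDerivAt_slice t x))
  have e2 : (fun s => _root_.pd (F s) j x) =ᶠ[nhds t]
      (fun s => fderiv ℝ U (s, x) (0, EuclideanSpace.single j 1)) := by
    filter_upwards [Ioi_mem_nhds ht] with s hs
    rw [hF.pd_eq j (le_of_lt hs), fderivWithin_of_mem_nhds
      (prod_mem_nhds (Ici_mem_nhds hs) univ_mem)]
  have h3 := h2.congr_of_eventuallyEq e2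
  have e3 : _root_.pd (fun y => deriv (fun s => F s y) t) j x =
      fderiv ℝ (fderiv ℝ U) (t, x) (1, 0) (0, EuclideanSpace.single j 1) := by
    rw [e1, _root_.pd, h1.fderiv]
    simpa using hs _ _
  rw [e3]; exact h3

/-- Line derivative along the `j`-th coordinate direction. -/
def HP (f : E6 → ℂ) (f' : ℂ) (j : Fin 6) (x : E6) : Prop :=
  HasLineDerivAt ℝ f f' x (EuclideanSpace.single j 1)

lemma Nice.hp {F : ℝ → E6 → ℂ} (hF : Nice F) {t : ℝ} (ht : 0 ≤ t) (j : Fin 6) (x : E6) :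
    HP (F t) (_root_.pd (F t) j x) j x :=
  (hF.diff ht x).hasFDerivAt.hasLineDerivAt _

lemma HP.pd_eq {F : ℝ → E6 → ℂ} (hF : Nice F) {t : ℝ} (ht : 0 ≤ t) {j : Fin 6} {x : E6} {f' : ℂ}
    (h : HP (F t) f' j x) : pd (F t) j x = f' :=
  (hF.hp ht j x).unique h

lemma HP.mul {f g : E6 → ℂ} {f' g' : ℂ} {j : Fin 6} {x : E6} (hf : HP f f' j x) (hg : HP g g' j x) :
    HP (fun x => f x * g x) (f' * g x + f x * g') j x := by
  have := HasDerivAt.fun_mul hf hg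
  simpa [HP, HasLineDerivAt] using this

lemma HP.add {f g : E6 → ℂ} {f' g' : ℂ} {j : Fin 6} {x : E6} (hf : HP f f' j x) (hg : HP g g' j x) :
    HP (fun x => f x + g x) (f' + g') j x := HasDerivAt.fun_add hf hg

lemma HP.sub {f g : E6 → ℂ} {f' g' : ℂ} {j : Fin 6} {x : E6} (hf : HP f f' j x) (hg : HP g g' j x) :
    HP (fun x => f x - g x) (f' - g') j x := HasDerivAt.fun_sub hf hg

lemma HP.const_mul {f : E6 → ℂ} {f' : ℂ} {j : Fin 6} {x : E6} (c : ℂ) (hf : HP f f' j x) :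
    HP (fun x => c * f x) (c * f') j x := HasDerivAt.const_mul c hf

lemma HP.sum {f : Fin 6 → E6 → ℂ} {f' : Fin 6 → ℂ} {j : Fin 6} {x : E6}
    (hf : ∀ k, HP (f k) (f' k) j x) :
    HP (fun x => ∑ k, f k x) (∑ k, f' k) j x := HasDerivAt.fun_sum fun k _ => hf k

lemma HP.conj {f : E6 → ℂ} {f' : ℂ} {j : Fin 6} {x : E6} (hf : HP f f' j x) :
    HP (fun x => (starRingEnd ℂ) (f x)) ((starRingEnd ℂ) f') j x :=
  Complex.conjCLE.toContinuousLinearMap.hasFDerivAt.comp_hasDerivAt (0 : ℝ) hf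

lemma HP.cx (k j : Fin 6) (x : E6) : HP (cx k) (if k = j then 1 else 0) j x := by
  have h := ((cxL k).hasFDerivAt (x := x)).hasLineDerivAt (EuclideanSpace.single j 1)
  have e : (cxL k) (EuclideanSpace.single j 1) = if k = j then 1 else 0 := by
    by_cases hk : k = j <;> simp [cxL, hk, Pi.single_apply]
  rw [e, ← cx_eq] at h
  exact h

lemma Nice.pd_conj {F : ℝ → E6 → ℂ} (hF : Nice F) {t : ℝ} (ht : 0 ≤ t) (j : Fin 6) (x : E6) :
    _root_.pd (fun x => (starRingEnd ℂ) (F t x)) j x = (starRingEnd ℂ) (_root_.pd (F t) j x) :=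
  HP.pd_eq hF.conj ht (hF.hp ht j x).conj

lemma hd_conj {f : ℝ → ℂ} {f' : ℂ} {t : ℝ} (hf : HasDerivAt f f' t) :
    HasDerivAt (fun x => (starRingEnd ℂ) (f x)) ((starRingEnd ℂ) f') t :=
  Complex.conjCLE.toContinuousLinearMap.hasFDerivAt.comp_hasDerivAt t hf

lemma Nice.pd_comm {F : ℝ → E6 → ℂ} (hF : Nice F) {t : ℝ} (ht : 0 ≤ t) (j k : Fin 6) (x : E6) :
    _root_.pd (fun y => _root_.pd (F t) j y) k x = _root_.pd (fun y => _root_.pd (F t) k y) j x := by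
  have hc := (hF.1 t ht).contDiffAt (x := x)
  have hs : IsSymmSndFDerivAt ℝ (F t) x := hc.isSymmSndFDerivAt (by simpa using two_le_top)
  have hd : HasFDerivAt (fderiv ℝ (F t)) (fderiv ℝ (fderiv ℝ (F t)) x) x :=
    ((hc.fderiv_right (m := 1) oneone_le_top).differentiableAt (by simp)).hasFDerivAt
  have h1 : ∀ j, HasFDerivAt (fun y => _root_.pd (F t) j y)
      ((ContinuousLinearMap.apply ℝ ℂ (EuclideanSpace.single j 1 : E6)).comp
        (fderiv ℝ (fderiv ℝ (F t)) x)) x := fun j =>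
    (ContinuousLinearMap.apply ℝ ℂ (EuclideanSpace.single j 1 : E6)).hasFDerivAt.comp x hd
  have e : ∀ j k, _root_.pd (fun y => _root_.pd (F t) j y) k x =
      fderiv ℝ (fderiv ℝ (F t)) x (EuclideanSpace.single k 1) (EuclideanSpace.single j 1) := by
    intro j k
    rw [_root_.pd, (h1 j).fderiv]; simp
  rw [e, e]; exact hs _ _

/-- The divergence theorem without boundary. -/
lemma div_zero' {F : Fin 6 → ℝ → E6 → ℂ} (hF : ∀ j, Nice (F j)) {t : ℝ} (ht : 0 ≤ t)
    {D : Fin 6 → E6 → ℂ} (hD : ∀ j x, HP (F j t) (D j x) j x) :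
    Integrable (fun x => ∑ j, D j x) ∧ ∫ x, ∑ j, D j x = 0 := by
  have e : ∀ j x, D j x = pd (F j t) j x := fun j x => ((hD j x).pd_eq (hF j) ht).symm
  simp only [e]
  have hi : ∀ j ∈ Finset.univ, Integrable (fun x => pd (F j t) j x) :=
    fun j _ => ((hF j).pd j).int ht
  refine ⟨integrable_finsetSum _ hi, ?_⟩
  rw [integral_finsetSum _ hi]
  exact Finset.sum_eq_zero fun j _ => (hF j).int_pd ht j


open ComplexConjugate

lemma lap_eq (f : E6 → ℂ) (x : E6) : lap f x = ∑ j, pd (fun y => pd f j y) j x := rfl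

lemma Nice.lap {F : ℝ → E6 → ℂ} (hF : Nice F) : Nice (fun t x => lap (F t) x) := by
  simp only [lap_eq]
  exact Nice.sum _ fun j => (hF.pd j).pd j

structure Sol (u v p q : ℝ → E6 → ℂ) : Prop where
  hu : Nice u
  hv : Nice v
  hp : Nice p
  hq : Nice q
  du : ∀ t, 0 < t → ∀ x, HasDerivAt (fun s => u s x) (p t x) t
  dv : ∀ t, 0 < t → ∀ x, HasDerivAt (fun s => v s x) (q t x) t
  duj : ∀ t, 0 < t → ∀ j x, HasDerivAt (fun s => pd (u s) j x) (pd (p t) j x) t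
  dvj : ∀ t, 0 < t → ∀ j x, HasDerivAt (fun s => pd (v s) j x) (pd (q t) j x) t
  pe : ∀ t x, p t x = Complex.I * (lap (u t) x + v t x * conj (u t x))
  qe : ∀ t x, q t x = Complex.I * ((1 / 2) * lap (v t) x + u t x * u t x)

def eden (u v : ℝ → E6 → ℂ) (t : ℝ) (x : E6) : ℂ :=
  (∑ j, pd (u t) j x * conj (pd (u t) j x)) + (1 / 4) * (∑ j, pd (v t) j x * conj (pd (v t) j x))
    - (1 / 2) * (conj (v t x) * (u t x * u t x) + v t x * (conj (u t x) * conj (u t x)))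

def eden' (u v p q : ℝ → E6 → ℂ) (t : ℝ) (x : E6) : ℂ :=
  (∑ j, (pd (p t) j x * conj (pd (u t) j x) + pd (u t) j x * conj (pd (p t) j x)))
   + (1 / 4) * (∑ j, (pd (q t) j x * conj (pd (v t) j x) + pd (v t) j x * conj (pd (q t) j x)))
    - (1 / 2) * ((conj (q t x) * (u t x * u t x)
        + conj (v t x) * (p t x * u t x + u t x * p t x))
      + (q t x * (conj (u t x) * conj (u t x))
        + v t x * (conj (p t x) * conj (u t x) + conj (u t x) * conj (p t x))))

def vden (u v : ℝ → E6 → ℂ) (t : ℝ) (x : E6) : ℂ :=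
  ∑ k, cx k x * (cx k x * (u t x * conj (u t x) + v t x * conj (v t x)))

def vden' (u v p q : ℝ → E6 → ℂ) (t : ℝ) (x : E6) : ℂ :=
  ∑ k, cx k x * (cx k x * ((p t x * conj (u t x) + u t x * conj (p t x))
    + (q t x * conj (v t x) + v t x * conj (q t x))))

def gden (u v : ℝ → E6 → ℂ) (j : Fin 6) (t : ℝ) (x : E6) : ℂ :=
  Complex.I * (pd (u t) j x * conj (u t x) - u t x * conj (pd (u t) j x))
    + (Complex.I * (1 / 2)) * (pd (v t) j x * conj (v t x) - v t x * conj (pd (v t) j x))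

def kden (u v : ℝ → E6 → ℂ) (t : ℝ) (x : E6) : ℂ :=
  ∑ j, cx j x * gden u v j t x

def kden' (u v p q : ℝ → E6 → ℂ) (t : ℝ) (x : E6) : ℂ :=
  ∑ j, cx j x * (Complex.I * ((pd (p t) j x * conj (u t x) + pd (u t) j x * conj (p t x))
      - (p t x * conj (pd (u t) j x) + u t x * conj (pd (p t) j x)))
    + (Complex.I * (1 / 2)) * ((pd (q t) j x * conj (v t x) + pd (v t) j x * conj (q t x))
      - (q t x * conj (pd (v t) j x) + v t x * conj (pd (q t) j x))))

lemma conj_half : conj (1 / 2 : ℂ) = 1 / 2 := by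
  simp only [map_div₀, map_one, map_ofNat]

section
variable {u v p q : ℝ → E6 → ℂ}

lemma nice_eden (hu : Nice u) (hv : Nice v) : Nice (eden u v) := by
  unfold eden
  repeat' first
    | assumption | apply Nice.conj | (apply Nice.sum; intro _) | apply Nice.const_mul
    | apply Nice.cmul | apply Nice.sub | apply Nice.add | apply Nice.mul | apply Nice.pd

lemma nice_vden (hu : Nice u) (hv : Nice v) : Nice (vden u v) := by
  unfold vden
  repeat' first
    | assumption | apply Nice.conj | (apply Nice.sum; intro _) | apply Nice.const_mul
    | apply Nice.cmul | apply Nice.sub | apply Nice.add | apply Nice.mul | apply Nice.pd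

lemma nice_gden (hu : Nice u) (hv : Nice v) (j : Fin 6) : Nice (gden u v j) := by
  unfold gden
  repeat' first
    | assumption | apply Nice.conj | (apply Nice.sum; intro _) | apply Nice.const_mul
    | apply Nice.cmul | apply Nice.sub | apply Nice.add | apply Nice.mul | apply Nice.pd

lemma nice_kden (hu : Nice u) (hv : Nice v) : Nice (kden u v) := by
  unfold kden
  exact Nice.sum _ fun j => (nice_gden hu hv j).cmul j

lemma Sol.nice_eden' (S : Sol u v p q) : Nice (eden' u v p q) := by
  obtain ⟨hu, hv, hp, hq, -, -, -, -, -, -⟩ := S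
  unfold eden'
  repeat' first
    | assumption | apply Nice.conj | (apply Nice.sum; intro _) | apply Nice.const_mul
    | apply Nice.cmul | apply Nice.sub | apply Nice.add | apply Nice.mul | apply Nice.pd

lemma Sol.nice_vden' (S : Sol u v p q) : Nice (vden' u v p q) := by
  obtain ⟨hu, hv, hp, hq, -, -, -, -, -, -⟩ := S
  unfold vden'
  repeat' first
    | assumption | apply Nice.conj | (apply Nice.sum; intro _) | apply Nice.const_mul
    | apply Nice.cmul | apply Nice.sub | apply Nice.add | apply Nice.mul | apply Nice.pd

lemma Sol.nice_kden' (S : Sol u v p q) : Nice (kden' u v p q) := by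
  obtain ⟨hu, hv, hp, hq, -, -, -, -, -, -⟩ := S
  unfold kden'
  repeat' first
    | assumption | apply Nice.conj | (apply Nice.sum; intro _) | apply Nice.const_mul
    | apply Nice.cmul | apply Nice.sub | apply Nice.add | apply Nice.mul | apply Nice.pd

lemma Sol.hd_eden (S : Sol u v p q) {t : ℝ} (ht : 0 < t) :
    HasDerivAt (fun s => ∫ x, eden u v s x) (∫ x, eden' u v p q t x) t := by
  refine (nice_eden S.hu S.hv).hasDerivAt S.nice_eden' (fun t ht x => ?_) ht
  have a := S.du t ht x
  have b := S.dv t ht x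
  have a' := hd_conj a
  have b' := hd_conj b
  have aj := fun j => S.duj t ht j x
  have bj := fun j => S.dvj t ht j x
  have aj' := fun j => hd_conj (aj j)
  have bj' := fun j => hd_conj (bj j)
  exact ((HasDerivAt.fun_sum fun j _ => (aj j).fun_mul (aj' j)).fun_add
    ((HasDerivAt.fun_sum fun j _ => (bj j).fun_mul (bj' j)).const_mul _)).fun_sub
    (((b'.fun_mul (a.fun_mul a)).fun_add (b.fun_mul (a'.fun_mul a'))).const_mul _)

lemma Sol.hd_vden (S : Sol u v p q) {t : ℝ} (ht : 0 < t) :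
    HasDerivAt (fun s => ∫ x, vden u v s x) (∫ x, vden' u v p q t x) t := by
  refine (nice_vden S.hu S.hv).hasDerivAt S.nice_vden' (fun t ht x => ?_) ht
  have a := S.du t ht x
  have b := S.dv t ht x
  have a' := hd_conj a
  have b' := hd_conj b
  exact HasDerivAt.fun_sum fun k _ => (((a.fun_mul a').fun_add (b.fun_mul b')).const_mul _).const_mul _

lemma Sol.hd_kden (S : Sol u v p q) {t : ℝ} (ht : 0 < t) :
    HasDerivAt (fun s => ∫ x, kden u v s x) (∫ x, kden' u v p q t x) t := by
  refine (nice_kden S.hu S.hv).hasDerivAt S.nice_kden' (fun t ht x => ?_) ht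
  have a := S.du t ht x
  have b := S.dv t ht x
  have a' := hd_conj a
  have b' := hd_conj b
  have aj := fun j => S.duj t ht j x
  have bj := fun j => S.dvj t ht j x
  have aj' := fun j => hd_conj (aj j)
  have bj' := fun j => hd_conj (bj j)
  exact HasDerivAt.fun_sum fun j _ => (HasDerivAt.fun_add
    ((((aj j).fun_mul a').fun_sub (a.fun_mul (aj' j))).const_mul _)
    ((((bj j).fun_mul b').fun_sub (b.fun_mul (bj' j))).const_mul _)).const_mul _

lemma Sol.int_eden' (S : Sol u v p q) {t : ℝ} (ht : 0 ≤ t) : ∫ x, eden' u v p q t x = 0 := by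
  have hu := S.hu
  have hv := S.hv
  have hp := S.hp
  have hq := S.hq
  have hdiv := div_zero' (F := fun j t x =>
    (p t x * conj (pd (u t) j x) + pd (u t) j x * conj (p t x))
      + (1 / 4) * (q t x * conj (pd (v t) j x) + pd (v t) j x * conj (q t x)))
    (fun j => by
      repeat' first
        | assumption | apply Nice.conj | (apply Nice.sum; intro _) | apply Nice.const_mul
        | apply Nice.cmul | apply Nice.sub | apply Nice.add | apply Nice.mul | apply Nice.pd) ht
    (fun j x => ((hp.hp ht j x).mul ((hu.pd j).hp ht j x).conj |>.add
        (((hu.pd j).hp ht j x).mul (hp.hp ht j x).conj)).add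
      (((hq.hp ht j x).mul ((hv.pd j).hp ht j x).conj |>.add
        (((hv.pd j).hp ht j x).mul (hq.hp ht j x).conj)).const_mul _))
  rw [← hdiv.2]
  congr 1; ext x
  simp only [eden', S.pe t x, S.qe t x, lap_eq, map_mul, map_add, Complex.conj_I, map_sum,
    Complex.conj_conj]
  rw [conj_half]
  simp only [Finset.sum_add_distrib, ← Finset.mul_sum, ← Finset.sum_mul]
  ring

end

lemma poho_alg (X a b : Fin 6 → ℂ) (A B : Fin 6 → Fin 6 → ℂ) (w w' : ℂ)
    (hA : ∀ j k, A j k = A k j) (hB : ∀ j k, B j k = B k j) :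
    6 * (w' * (∑ j, A j j) + w * ∑ j, B j j)
      + 2 * (∑ j, X j * (a j * (∑ k, B k k) + b j * ∑ k, A k k))
      + 4 * ∑ j, a j * b j
    = ∑ j, ((6 * ((b j * a j + w' * A j j) + (a j * b j + w * B j j))
      + 2 * ∑ k, ((if k = j then 1 else 0) * (a k * b j + b k * a j)
        + X k * ((A k j * b j + a k * B j j) + (B k j * a j + b k * A j j))))
      - 2 * ((if j = j then 1 else 0) * (∑ k, a k * b k)
        + X j * ∑ k, (A k j * b k + a k * B k j))) := by
  have h1 : ∑ j, ∑ k, X k * (A k j * b j) = ∑ j, X j * ∑ k, A k j * b k := by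
    rw [Finset.sum_comm]
    refine Finset.sum_congr rfl fun j _ => ?_
    rw [Finset.mul_sum]
    exact Finset.sum_congr rfl fun k _ => by rw [hA]
  have h2 : ∑ j, ∑ k, X k * (B k j * a j) = ∑ j, X j * ∑ k, a k * B k j := by
    rw [Finset.sum_comm]
    refine Finset.sum_congr rfl fun j _ => ?_
    rw [Finset.mul_sum]
    exact Finset.sum_congr rfl fun k _ => by rw [hB]; ring
  have h3 : ∑ j, ∑ k, X k * (a k * B j j) = ∑ j, X j * (a j * ∑ k, B k k) := by
    rw [Finset.sum_comm]
    exact Finset.sum_congr rfl fun k _ => by rw [Finset.mul_sum, Finset.mul_sum]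
  have h4 : ∑ j, ∑ k, X k * (b k * A j j) = ∑ j, X j * (b j * ∑ k, A k k) := by
    rw [Finset.sum_comm]
    exact Finset.sum_congr rfl fun k _ => by rw [Finset.mul_sum, Finset.mul_sum]
  have h5 : ∑ j, b j * a j = ∑ j, a j * b j := Finset.sum_congr rfl fun k _ => mul_comm _ _
  simp only [mul_add, ite_mul, zero_mul, one_mul, Finset.sum_add_distrib, Finset.sum_sub_distrib,
    Finset.sum_ite_eq', Finset.mem_univ, if_true, ← Finset.mul_sum, h1, h2, h3, h4, h5,
    Finset.sum_const, Finset.card_univ, Fintype.card_fin, nsmul_eq_mul]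
  push_cast
  ring

lemma vir_alg (X a b c d A B C D : Fin 6 → ℂ) (u u' v v' : ℂ) :
    (∑ k, X k * (X k * ((Complex.I * ((∑ j, A j) + v * u') * u'
        + u * (-Complex.I * ((∑ j, B j) + v' * u)))
      + (Complex.I * (1 / 2 * (∑ j, C j) + u * u) * v'
        + v * (-Complex.I * (1 / 2 * (∑ j, D j) + u' * u'))))))
      + 2 * ∑ j, X j * (Complex.I * (a j * u' - u * b j)
        + Complex.I * (1 / 2) * (c j * v' - v * d j))
    = ∑ j, ∑ k, ((if k = j then 1 else 0) * (X k * (Complex.I * (a j * u' - u * b j)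
        + Complex.I * (1 / 2) * (c j * v' - v * d j)))
      + X k * ((if k = j then 1 else 0) * (Complex.I * (a j * u' - u * b j)
        + Complex.I * (1 / 2) * (c j * v' - v * d j))
        + X k * (Complex.I * (A j * u' - u * B j)
        + Complex.I * (1 / 2) * (C j * v' - v * D j)))) := by
  have h1 : ∀ G : Fin 6 → ℂ, ∑ j, ∑ k, X k * (X k * G j) = ∑ k, X k * (X k * ∑ j, G j) := by
    intro G
    rw [Finset.sum_comm]
    exact Finset.sum_congr rfl fun k _ => by rw [Finset.mul_sum, Finset.mul_sum]
  have e : ∀ j k : Fin 6, ((if k = j then 1 else 0) * (X k * (Complex.I * (a j * u' - u * b j)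
        + Complex.I * (1 / 2) * (c j * v' - v * d j)))
      + X k * ((if k = j then 1 else 0) * (Complex.I * (a j * u' - u * b j)
        + Complex.I * (1 / 2) * (c j * v' - v * d j))
        + X k * (Complex.I * (A j * u' - u * B j)
        + Complex.I * (1 / 2) * (C j * v' - v * D j)))) =
      (if k = j then 2 * (X j * (Complex.I * (a j * u' - u * b j)
        + Complex.I * (1 / 2) * (c j * v' - v * d j))) else 0)
       + X k * (X k * (Complex.I * (A j * u' - u * B j)
        + Complex.I * (1 / 2) * (C j * v' - v * D j))) := by
    intro j k
    split_ifs with h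
    · subst h; ring
    · ring
  simp only [e, Finset.sum_add_distrib, h1, Finset.sum_ite_eq', Finset.mem_univ, if_true]
  rw [← Finset.mul_sum, add_comm]
  congr 1
  refine Finset.sum_congr rfl fun k _ => ?_
  simp only [Finset.sum_add_distrib, Finset.sum_sub_distrib, ← Finset.mul_sum, ← Finset.sum_mul]
  ring

section
variable {u v p q : ℝ → E6 → ℂ}

lemma HP.gden (hu : Nice u) (hv : Nice v) {t : ℝ} (ht : 0 ≤ t) (j : Fin 6) (x : E6) :
    HP (gden u v j t) (Complex.I * (pd (fun y => pd (u t) j y) j x * conj (u t x)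
        - u t x * conj (pd (fun y => pd (u t) j y) j x))
      + (Complex.I * (1 / 2)) * (pd (fun y => pd (v t) j y) j x * conj (v t x)
        - v t x * conj (pd (fun y => pd (v t) j y) j x))) j x := by
  have a := hu.hp ht j x
  have b := hv.hp ht j x
  have aj := (hu.pd j).hp ht j x
  have bj := (hv.pd j).hp ht j x
  have h := (((aj.mul a.conj).sub (a.mul aj.conj)).const_mul Complex.I).add
    (((bj.mul b.conj).sub (b.mul bj.conj)).const_mul (Complex.I * (1 / 2)))
  have e : ∀ z w : ℂ, z = w → HP (_root_.gden u v j t) z j x → HP (_root_.gden u v j t) w j x :=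
    fun z w h => h ▸ id
  exact e _ _ (by ring) h

lemma Sol.int_vden' (S : Sol u v p q) {t : ℝ} (ht : 0 ≤ t) :
    ∫ x, vden' u v p q t x = -2 * ∫ x, kden u v t x := by
  have hu := S.hu
  have hv := S.hv
  have hdiv := div_zero' (F := fun j t x => ∑ k, cx k x * (cx k x * gden u v j t x))
    (fun j => Nice.sum _ fun k => ((nice_gden hu hv j).cmul k).cmul k) ht
    (fun j x => HP.sum fun k => (HP.cx k j x).mul ((HP.cx k j x).mul (HP.gden hu hv ht j x)))
  have h2 : ∫ x, (vden' u v p q t x + 2 * kden u v t x) = 0 := by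
    rw [← hdiv.2]
    congr 1; ext x
    simp only [vden', kden, gden, S.pe t x, S.qe t x, lap_eq, map_mul, map_add, Complex.conj_I,
      map_sum, Complex.conj_conj, conj_half]
    exact vir_alg (fun k => cx k x) (fun k => pd (u t) k x) (fun k => conj (pd (u t) k x))
      (fun k => pd (v t) k x) (fun k => conj (pd (v t) k x))
      (fun k => pd (fun y => pd (u t) k y) k x) (fun k => conj (pd (fun y => pd (u t) k y) k x))
      (fun k => pd (fun y => pd (v t) k y) k x) (fun k => conj (pd (fun y => pd (v t) k y) k x))
      (u t x) (conj (u t x)) (v t x) (conj (v t x))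
  rw [integral_add (S.nice_vden'.int ht) (((nice_kden hu hv).const_mul 2).int ht),
    integral_const_mul] at h2
  linear_combination h2

lemma poho {w : ℝ → E6 → ℂ} (hw : Nice w) {t : ℝ} (ht : 0 ≤ t) :
    Integrable (fun x => 6 * (conj (w t x) * lap (w t) x + w t x * conj (lap (w t) x))
      + 2 * (∑ j, cx j x * (pd (w t) j x * conj (lap (w t) x) + conj (pd (w t) j x) * lap (w t) x))
      + 4 * ∑ j, pd (w t) j x * conj (pd (w t) j x)) ∧
    ∫ x, (6 * (conj (w t x) * lap (w t) x + w t x * conj (lap (w t) x))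
      + 2 * (∑ j, cx j x * (pd (w t) j x * conj (lap (w t) x) + conj (pd (w t) j x) * lap (w t) x))
      + 4 * ∑ j, pd (w t) j x * conj (pd (w t) j x)) = 0 := by
  have hdiv := div_zero' (F := fun j t x =>
    (6 * (conj (w t x) * pd (w t) j x + w t x * conj (pd (w t) j x))
      + 2 * ∑ k, cx k x * (pd (w t) k x * conj (pd (w t) j x) + conj (pd (w t) k x) * pd (w t) j x))
      - 2 * (cx j x * ∑ k, pd (w t) k x * conj (pd (w t) k x)))
    (fun j => by
      repeat' first
        | assumption | apply Nice.conj | (apply Nice.sum; intro _) | apply Nice.const_mul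
        | apply Nice.cmul | apply Nice.sub | apply Nice.add | apply Nice.mul | apply Nice.pd) ht
    (fun j x => by
      have a := hw.hp ht j x
      have aj := fun k => (hw.pd k).hp ht j x
      exact ((((a.conj.mul (aj j)).add (a.mul (aj j).conj)).const_mul 6).add
        ((HP.sum fun k => (HP.cx k j x).mul
          (((aj k).mul (aj j).conj).add ((aj k).conj.mul (aj j)))).const_mul 2)).sub
        (((HP.cx j j x).mul (HP.sum fun k => (aj k).mul (aj k).conj)).const_mul 2))
  have e := fun x => poho_alg (fun k => cx k x) (fun k => pd (w t) k x)
    (fun k => conj (pd (w t) k x)) (fun k j => pd (fun y => pd (w t) k y) j x)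
    (fun k j => conj (pd (fun y => pd (w t) k y) j x)) (w t x) (conj (w t x))
    (fun j k => hw.pd_comm ht j k x) (fun j k => by rw [hw.pd_comm ht j k x])
  simp only [lap_eq, map_sum]
  exact ⟨hdiv.1.congr (Eventually.of_forall fun x => (e x).symm),
    (integral_congr_ae (Eventually.of_forall e)).trans hdiv.2⟩

end

def hden (u v : ℝ → E6 → ℂ) (t : ℝ) (x : E6) : ℂ :=
  (∑ j, pd (u t) j x * conj (pd (u t) j x)) + (1 / 4) * (∑ j, pd (v t) j x * conj (pd (v t) j x))

lemma kin_alg (X a b c d P P' Q Q' : Fin 6 → ℂ) (u u' v v' p p' q q' L L' M M' : ℂ)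
    (hp : Complex.I * p = -(L + v * u')) (hp' : Complex.I * p' = L' + v' * u)
    (hq : Complex.I * q = -(1 / 2 * M + u * u)) (hq' : Complex.I * q' = 1 / 2 * M' + u' * u') :
    (∑ j, X j * (Complex.I * ((P j * u' + a j * p') - (p * b j + u * P' j))
      + (Complex.I * (1 / 2)) * ((Q j * v' + c j * q') - (q * d j + v * Q' j))))
      + (-2 * ((∑ j, a j * b j) + (1 / 4) * ∑ j, c j * d j)
      + 6 * ((∑ j, a j * b j) + (1 / 4) * (∑ j, c j * d j)
        - (1 / 2) * (v' * (u * u) + v * (u' * u'))))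
    = (∑ j : Fin 6, ((if j = j then 1 else 0) * ((Complex.I * (p * u' - u * p')
          + Complex.I * (1 / 2) * (q * v' - v * q')) + (v' * (u * u) + v * (u' * u')))
        + X j * ((Complex.I * (P j * u' + p * b j - (a j * p' + u * P' j))
          + Complex.I * (1 / 2) * (Q j * v' + q * d j - (c j * q' + v * Q' j)))
          + ((d j * (u * u) + v' * (a j * u + u * a j))
            + (c j * (u' * u') + v * (b j * u' + u' * b j))))))
     + ((6 * (u' * L + u * L') + 2 * (∑ j, X j * (a j * L' + b j * L)) + 4 * ∑ j, a j * b j)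
     + (1 / 4) * (6 * (v' * M + v * M') + 2 * (∑ j, X j * (c j * M' + d j * M))
        + 4 * ∑ j, c j * d j)) := by
  simp only [if_true, one_mul, Fin.sum_univ_six]
  linear_combination
    (2 * (X 0 * a 0 + X 1 * a 1 + X 2 * a 2 + X 3 * a 3 + X 4 * a 4 + X 5 * a 5) + 6 * u) * hp'
    + (-2 * (X 0 * b 0 + X 1 * b 1 + X 2 * b 2 + X 3 * b 3 + X 4 * b 4 + X 5 * b 5) - 6 * u') * hp
    + ((X 0 * c 0 + X 1 * c 1 + X 2 * c 2 + X 3 * c 3 + X 4 * c 4 + X 5 * c 5) + 3 * v) * hq'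
    + (-(X 0 * d 0 + X 1 * d 1 + X 2 * d 2 + X 3 * d 3 + X 4 * d 4 + X 5 * d 5) - 3 * v') * hq

section
variable {u v p q : ℝ → E6 → ℂ}

lemma nice_hden (hu : Nice u) (hv : Nice v) : Nice (hden u v) := by
  unfold hden
  repeat' first
    | assumption | apply Nice.conj | (apply Nice.sum; intro _) | apply Nice.const_mul
    | apply Nice.cmul | apply Nice.sub | apply Nice.add | apply Nice.mul | apply Nice.pd

lemma Sol.int_kden' (S : Sol u v p q) {t : ℝ} (ht : 0 ≤ t) :
    ∫ x, kden' u v p q t x = 2 * (∫ x, hden u v t x) - 6 * ∫ x, eden u v t x := by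
  have hu := S.hu
  have hv := S.hv
  have hp := S.hp
  have hq := S.hq
  have hdiv := div_zero' (F := fun j t x => cx j x *
    ((Complex.I * (p t x * conj (u t x) - u t x * conj (p t x))
      + Complex.I * (1 / 2) * (q t x * conj (v t x) - v t x * conj (q t x)))
      + (conj (v t x) * (u t x * u t x) + v t x * (conj (u t x) * conj (u t x)))))
    (fun j => by
      repeat' first
        | assumption | apply Nice.conj | (apply Nice.sum; intro _) | apply Nice.const_mul
        | apply Nice.cmul | apply Nice.sub | apply Nice.add | apply Nice.mul | apply Nice.pd) ht
    (fun j x => by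
      have a := hu.hp ht j x
      have b := hv.hp ht j x
      have c := hp.hp ht j x
      have d := hq.hp ht j x
      exact (HP.cx j j x).mul (((((c.mul a.conj).sub (a.mul c.conj)).const_mul Complex.I).add
        (((d.mul b.conj).sub (b.mul d.conj)).const_mul (Complex.I * (1 / 2)))).add
        ((b.conj.mul (a.mul a)).add (b.mul (a.conj.mul a.conj)))))
  obtain ⟨hd1, hd2⟩ := hdiv
  have hPu := poho hu ht
  have hPv := poho hv ht
  have iH := (nice_hden hu hv).int ht
  have iE := (nice_eden hu hv).int ht
  have key : ∫ x, (kden' u v p q t x + (-2 * hden u v t x + 6 * eden u v t x)) = 0 := by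
    have h0 := integral_add hd1 (hPu.1.add (hPv.1.const_mul (1 / 4)))
    rw [hd2, integral_add' hPu.1 (hPv.1.const_mul (1 / 4)), integral_const_mul, hPu.2, hPv.2] at h0
    simp only [mul_zero, add_zero] at h0
    rw [← h0]
    refine integral_congr_ae (Eventually.of_forall fun x => ?_)
    have hI : Complex.I * Complex.I = -1 := Complex.I_mul_I
    refine kin_alg (fun j => cx j x) (fun j => pd (u t) j x) (fun j => conj (pd (u t) j x))
      (fun j => pd (v t) j x) (fun j => conj (pd (v t) j x))
      (fun j => pd (p t) j x) (fun j => conj (pd (p t) j x))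
      (fun j => pd (q t) j x) (fun j => conj (pd (q t) j x))
      (u t x) (conj (u t x)) (v t x) (conj (v t x)) (p t x) (conj (p t x)) (q t x) (conj (q t x))
      (lap (u t) x) (conj (lap (u t) x)) (lap (v t) x) (conj (lap (v t) x)) ?_ ?_ ?_ ?_
    · rw [S.pe]; linear_combination (lap (u t) x + v t x * conj (u t x)) * hI
    · rw [S.pe]
      simp only [map_mul, map_add, Complex.conj_I, Complex.conj_conj]
      linear_combination (-(conj (lap (u t) x) + conj (v t x) * u t x)) * hI
    · rw [S.qe]; linear_combination (1 / 2 * lap (v t) x + u t x * u t x) * hI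
    · rw [S.qe]
      simp only [map_mul, map_add, Complex.conj_I, conj_half]
      linear_combination (-(1 / 2 * conj (lap (v t) x) + conj (u t x) * conj (u t x))) * hI
  have iS : Integrable (fun x => -2 * hden u v t x + 6 * eden u v t x) :=
    (iH.const_mul _).add (iE.const_mul _)
  rw [integral_add (S.nice_kden'.int ht) iS,
    integral_add (iH.const_mul _) (iE.const_mul _), integral_const_mul, integral_const_mul] at key
  linear_combination key

end

lemma sol_nice {u v : ℝ → E6 → ℂ} (h : IsClassicalSol (1 / 2) (Set.Ici (0 : ℝ)) u v) :
    Nice u ∧ Nice v := by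
  constructor
  · refine ⟨fun t ht => (h.schwartz_u t ht).1, fun T k n => ?_⟩
    obtain ⟨C, hC⟩ := h.bounds (Set.Icc 0 T) (fun t ht => ht.1) isCompact_Icc k n
    exact ⟨C, fun t h0 hT x => (hC t ⟨h0, hT⟩ x).1⟩
  · refine ⟨fun t ht => (h.schwartz_v t ht).1, fun T k n => ?_⟩
    obtain ⟨C, hC⟩ := h.bounds (Set.Icc 0 T) (fun t ht => ht.1) isCompact_Icc k n
    exact ⟨C, fun t h0 hT x => (hC t ⟨h0, hT⟩ x).2⟩

lemma sol_js {u v : ℝ → E6 → ℂ} (h : IsClassicalSol (1 / 2) (Set.Ici (0 : ℝ)) u v) :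
    JS u ∧ JS v := ⟨h.smooth.fst, h.smooth.snd⟩

lemma sol_sol {u v : ℝ → E6 → ℂ} (h : IsClassicalSol (1 / 2) (Set.Ici (0 : ℝ)) u v) :
    ∃ p q, Sol u v p q := by
  obtain ⟨hu, hv⟩ := sol_nice h
  obtain ⟨ju, jv⟩ := sol_js h
  have hI : Complex.I * Complex.I = -1 := Complex.I_mul_I
  have eu : ∀ t, 0 < t → ∀ x, deriv (fun s => u s x) t
      = Complex.I * (lap (u t) x + v t x * conj (u t x)) := by
    intro t ht x
    have := h.eqn_u t ht.le x
    linear_combination (-Complex.I) * this + deriv (fun s => u s x) t * hI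
  have ev : ∀ t, 0 < t → ∀ x, deriv (fun s => v s x) t
      = Complex.I * ((1 / 2) * lap (v t) x + u t x * u t x) := by
    intro t ht x
    have := h.eqn_v t ht.le x
    push_cast at this
    linear_combination (-Complex.I) * this + deriv (fun s => v s x) t * hI
  refine ⟨fun t x => Complex.I * (lap (u t) x + v t x * conj (u t x)),
    fun t x => Complex.I * ((1 / 2) * lap (v t) x + u t x * u t x), hu, hv,
    (hu.lap.add (hv.mul hu.conj)).const_mul _,
    ((hv.lap.const_mul _).add (hu.mul hu)).const_mul _, ?_, ?_, ?_, ?_,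
    fun _ _ => rfl, fun _ _ => rfl⟩
  · intro t ht x
    have := ju.hasDerivAt ht x
    rwa [eu t ht x] at this
  · intro t ht x
    have := jv.hasDerivAt ht x
    rwa [ev t ht x] at this
  · intro t ht j x
    have := ju.comm ht j x
    rwa [funext (eu t ht)] at this
  · intro t ht j x
    have := jv.comm ht j x
    rwa [funext (ev t ht)] at this

lemma nice_gsq {F : ℝ → E6 → ℂ} (hF : Nice F) :
    Nice (fun t x => ∑ j, pd (F t) j x * conj (pd (F t) j x)) :=
  Nice.sum _ fun j => (hF.pd j).mul (hF.pd j).conj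

lemma gsq_eq (f : E6 → ℂ) (x : E6) :
    (∑ j, pd f j x * conj (pd f j x)) = ((gradNormSq f x : ℝ) : ℂ) := by
  unfold gradNormSq
  push_cast
  exact Finset.sum_congr rfl fun j _ => by rw [Complex.mul_conj, Complex.normSq_eq_norm_sq]; push_cast; rfl

lemma hen_eq {u v : ℝ → E6 → ℂ} (hu : Nice u) (hv : Nice v) {t : ℝ} (ht : 0 ≤ t) :
    ((Hen (1 / 2) (u t) (v t) : ℝ) : ℂ) = ∫ x, hden u v t x := by
  unfold hden
  rw [integral_add ((nice_gsq hu).int ht) (((nice_gsq hv).int ht).const_mul _), integral_const_mul]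
  simp_rw [gsq_eq]
  rw [integral_complex_ofReal, integral_complex_ofReal]
  unfold Hen
  push_cast
  ring

lemma een_eq {u v : ℝ → E6 → ℂ} (hu : Nice u) (hv : Nice v) {t : ℝ} (ht : 0 ≤ t) :
    ((Een (1 / 2) (u t) (v t) : ℝ) : ℂ) = ∫ x, eden u v t x := by
  have i1 : Integrable (fun x => conj (v t x) * (u t x * u t x)) := (hv.conj.mul (hu.mul hu)).int ht
  have i2 : Integrable (fun x => v t x * (conj (u t x) * conj (u t x))) :=
    (hv.mul (hu.conj.mul hu.conj)).int ht
  have e : ∀ x, eden u v t x = hden u v t x - (1 / 2) * (conj (v t x) * (u t x * u t x)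
      + v t x * (conj (u t x) * conj (u t x))) := fun x => rfl
  have i3 : Integrable (fun x => conj (v t x) * (u t x * u t x)
      + v t x * (conj (u t x) * conj (u t x))) := i1.add i2
  simp_rw [e]
  rw [integral_sub ((nice_hden hu hv).int ht) (i3.const_mul _), integral_const_mul,
    integral_add i1 i2, ← hen_eq hu hv ht]
  have e2 : ∫ x, v t x * (conj (u t x) * conj (u t x))
      = conj (∫ x, conj (v t x) * (u t x * u t x)) := by
    rw [← integral_conj]
    simp
  rw [e2, Complex.add_conj]
  unfold Een Ren
  simp only [pow_two]
  push_cast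
  ring

lemma sol_H_cont {u v : ℝ → E6 → ℂ} (hu : Nice u) (hv : Nice v) (ju : JS u) (jv : JS v) :
    ContinuousOn (fun t => Hen (1 / 2) (u t) (v t)) (Set.Ici 0) := by
  have h := (nice_hden hu hv).continuousOn fun x => by
    unfold hden
    have cj : ∀ {f : ℝ → ℂ}, ContinuousOn f (Set.Ici 0) →
        ContinuousOn (fun s => conj (f s)) (Set.Ici 0) := fun hf =>
      Complex.continuous_conj.comp_continuousOn hf
    exact (continuousOn_finsetSum _ fun j _ => ((ju.pd j).cont x).mul (cj ((ju.pd j).cont x))).add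
      (continuousOn_const.mul
        (continuousOn_finsetSum _ fun j _ => ((jv.pd j).cont x).mul (cj ((jv.pd j).cont x))))
  refine (Complex.continuous_re.comp_continuousOn h).congr fun t ht => ?_
  simp [← hen_eq hu hv ht]

lemma sol_E_cont {u v : ℝ → E6 → ℂ} (hu : Nice u) (hv : Nice v) (ju : JS u) (jv : JS v) :
    ContinuousOn (fun t => Een (1 / 2) (u t) (v t)) (Set.Ici 0) := by
  have h := (nice_eden hu hv).continuousOn fun x => by
    unfold eden
    have cj : ∀ {f : ℝ → ℂ}, ContinuousOn f (Set.Ici 0) →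
        ContinuousOn (fun s => conj (f s)) (Set.Ici 0) := fun hf =>
      Complex.continuous_conj.comp_continuousOn hf
    have a := ju.cont x
    have b := jv.cont x
    exact ((continuousOn_finsetSum _ fun j _ => ((ju.pd j).cont x).mul (cj ((ju.pd j).cont x))).add
      (continuousOn_const.mul
        (continuousOn_finsetSum _ fun j _ => ((jv.pd j).cont x).mul (cj ((jv.pd j).cont x))))).sub
      (continuousOn_const.mul (((cj b).mul (a.mul a)).add (b.mul ((cj a).mul (cj a)))))
  refine (Complex.continuous_re.comp_continuousOn h).congr fun t ht => ?_
  simp [← een_eq hu hv ht]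

lemma re_hasDerivAt {f : ℝ → ℂ} {d : ℂ} {t : ℝ} (h : HasDerivAt f d t) :
    HasDerivAt (fun s => (f s).re) d.re t :=
  Complex.reCLM.hasFDerivAt.comp_hasDerivAt t h

lemma sol_E_const {u v p q : ℝ → E6 → ℂ} (S : Sol u v p q) (ju : JS u) (jv : JS v)
    {t : ℝ} (ht : 0 ≤ t) : Een (1 / 2) (u t) (v t) = Een (1 / 2) (u 0) (v 0) := by
  have hd : ∀ s, 0 < s → HasDerivAt (fun t => Een (1 / 2) (u t) (v t)) 0 s := by
    intro s hs
    have h := re_hasDerivAt (S.hd_eden hs)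
    rw [S.int_eden' hs.le] at h
    refine h.congr_of_eventuallyEq ?_
    filter_upwards [lt_mem_nhds hs] with r hr
    simp [← een_eq S.hu S.hv hr.le]
  rcases ht.eq_or_lt with rfl | h0
  · rfl
  · obtain ⟨c, -, hc2⟩ := exists_hasDerivAt_eq_slope (fun t => Een (1 / 2) (u t) (v t)) (fun _ => 0)
      h0 ((sol_E_cont S.hu S.hv ju jv).mono fun s hs => hs.1) (fun s hs => hd s hs.1)
    have := (div_eq_zero_iff.1 hc2.symm).resolve_right (by linarith)
    exact sub_eq_zero.1 this

lemma vden_nonneg {u v : ℝ → E6 → ℂ} (t : ℝ) :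
    0 ≤ (∫ x, vden u v t x).re := by
  have : ∀ x, vden u v t x
      = ((∑ k : Fin 6, x k * (x k * (‖u t x‖ ^ 2 + ‖v t x‖ ^ 2)) : ℝ) : ℂ) := by
    intro x
    unfold vden cx
    push_cast
    refine Finset.sum_congr rfl fun k _ => ?_
    rw [Complex.mul_conj, Complex.mul_conj, Complex.normSq_eq_norm_sq, Complex.normSq_eq_norm_sq]
    push_cast; rfl
  simp_rw [this]
  rw [integral_complex_ofReal, Complex.ofReal_re]
  refine integral_nonneg fun x => Finset.sum_nonneg fun k _ => ?_
  rw [← mul_assoc]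
  exact mul_nonneg (mul_self_nonneg _) (by positivity)

lemma virial_absurd (V D : ℝ → ℝ) (D' : ℝ → ℝ) (c : ℝ) (hc : 0 < c)
    (hV0 : ∀ t, 0 < t → 0 ≤ V t)
    (hV : ∀ t, 0 < t → HasDerivAt V (D t) t) (hD : ∀ t, 0 < t → HasDerivAt D (D' t) t)
    (hD' : ∀ t, 0 < t → D' t ≤ -c) : False := by
  have a1 : AntitoneOn (fun t => D t + c * t) (Set.Ici 1) := by
    have hh : ∀ t : ℝ, 0 < t → HasDerivAt (fun t => D t + c * t) (D' t + c) t := fun t ht => by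
      have := (hD t ht).add ((hasDerivAt_id t).const_mul c)
      rw [mul_one] at this
      exact this
    refine antitoneOn_of_deriv_nonpos (convex_Ici 1)
      (fun t ht => (hh t (by linarith [Set.mem_Ici.1 ht])).continuousAt.continuousWithinAt) ?_ ?_
    · intro t ht
      rw [interior_Ici] at ht
      exact (hh t (by linarith [Set.mem_Ioi.1 ht])).differentiableAt.differentiableWithinAt
    · intro t ht
      rw [interior_Ici] at ht
      have h0 : 0 < t := by linarith [Set.mem_Ioi.1 ht]
      rw [(hh t h0).deriv]; linarith [hD' t h0]
  have b1 : ∀ t, 1 ≤ t → D t + c * t ≤ D 1 + c := fun t ht => by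
    simpa using a1 (Set.mem_Ici.2 le_rfl) (Set.mem_Ici.2 ht) ht
  have a2 : AntitoneOn (fun t => V t - (D 1 + c) * t + c / 2 * t ^ 2) (Set.Ici 1) := by
    have hh : ∀ t : ℝ, 0 < t → HasDerivAt (fun t => V t - (D 1 + c) * t + c / 2 * t ^ 2)
        (D t - (D 1 + c) + c * t) t := fun t ht => by
      have := ((hV t ht).sub ((hasDerivAt_id t).const_mul (D 1 + c))).add
        ((hasDerivAt_pow 2 t).const_mul (c / 2))
      refine this.congr_deriv ?_
      push_cast
      ring
    refine antitoneOn_of_deriv_nonpos (convex_Ici 1)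
      (fun t ht => (hh t (by linarith [Set.mem_Ici.1 ht])).continuousAt.continuousWithinAt) ?_ ?_
    · intro t ht
      rw [interior_Ici] at ht
      exact (hh t (by linarith [Set.mem_Ioi.1 ht])).differentiableAt.differentiableWithinAt
    · intro t ht
      rw [interior_Ici] at ht
      have h1 : 1 < t := ht
      rw [(hh t (by linarith)).deriv]; linarith [b1 t h1.le]
  have b2 : ∀ t, 1 ≤ t → V t - (D 1 + c) * t + c / 2 * t ^ 2 ≤ V 1 - (D 1 + c) + c / 2 :=
    fun t ht => by simpa using a2 (Set.mem_Ici.2 le_rfl) (Set.mem_Ici.2 ht) ht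
  set A := |D 1 + c| with hA
  set B := |V 1 - (D 1 + c) + c / 2| with hB
  have hA0 : 0 ≤ A := abs_nonneg _
  have hB0 : 0 ≤ B := abs_nonneg _
  set t := 1 + 2 * (A + B + 1) / c with ht
  have ht1 : 1 ≤ t := by
    have : 0 ≤ 2 * (A + B + 1) / c := by positivity
    linarith
  have h := b2 t ht1
  have hv := hV0 t (by linarith)
  have hct : c * t = c + 2 * (A + B + 1) := by rw [ht]; field_simp
  have e1 : c / 2 * t ^ 2 = (c / 2 + (A + B + 1)) * t := by
    have : c / 2 * t ^ 2 = c * t / 2 * t := by ring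
    rw [this, hct]; ring
  have e2 : (D 1 + c) * t ≤ A * t := mul_le_mul_of_nonneg_right (le_abs_self _) (by linarith)
  have e3 : V 1 - (D 1 + c) + c / 2 ≤ B := le_abs_self _
  nlinarith [mul_nonneg hB0 (sub_nonneg.2 ht1), mul_pos hc (show (0:ℝ) < t by linarith)]

lemma trap (H : ℝ → ℝ) (a : ℝ) (hc : ContinuousOn H (Set.Ici 0)) (h0 : a < H 0)
    (hne : ∀ t, 0 ≤ t → H t ≠ a) : ∀ t, 0 ≤ t → a < H t := by
  intro t ht
  by_contra hcon
  push Not at hcon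
  obtain ⟨s, hs, he⟩ := intermediate_value_Icc' ht (hc.mono fun s hs => hs.1) ⟨hcon, h0.le⟩
  exact hne s hs.1 he

lemma main_of_ground (hW : Een (1 / 2) (W1 (1 / 2)) (W2 (1 / 2))
      = (1 / 3) * Hen (1 / 2) (W1 (1 / 2)) (W2 (1 / 2)))
    (hGN : ∀ u v : E6 → ℂ, IsSchwartz u → IsSchwartz v →
      Ren u v ≤ (2 / (3 * Real.sqrt (Hen (1 / 2) (W1 (1 / 2)) (W2 (1 / 2)))))
        * (Hen (1 / 2) u v) ^ (3 / 2 : ℝ)) (u v : ℝ → E6 → ℂ)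
    (h : IsClassicalSol (1 / 2) (Set.Ici (0 : ℝ)) u v)
    (hE : Een (1 / 2) (u 0) (v 0) < Een (1 / 2) (W1 (1 / 2)) (W2 (1 / 2)))
    (hH : Hen (1 / 2) (u 0) (v 0) > Hen (1 / 2) (W1 (1 / 2)) (W2 (1 / 2))) : False := by
  obtain ⟨p, q, S⟩ := sol_sol h
  obtain ⟨ju, jv⟩ := sol_js h
  have hpos : 0 ≤ Hen (1 / 2) (W1 (1 / 2)) (W2 (1 / 2)) := by
    unfold Hen gradNormSq
    have : ∀ f : E6 → ℂ, 0 ≤ ∫ x, ∑ j : Fin 6, ‖pd f j x‖ ^ 2 := fun f =>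
      integral_nonneg fun x => Finset.sum_nonneg fun j _ => by positivity
    have h1 := this (W1 (1 / 2))
    have h2 := this (W2 (1 / 2))
    linarith
  set a := Hen (1 / 2) (W1 (1 / 2)) (W2 (1 / 2)) with ha
  have hne : ∀ t, 0 ≤ t → Hen (1 / 2) (u t) (v t) ≠ a := by
    intro t ht he
    have h1 := hGN (u t) (v t) (h.schwartz_u t ht) (h.schwartz_v t ht)
    have h2 : Een (1 / 2) (u t) (v t) = Hen (1 / 2) (u t) (v t) - Ren (u t) (v t) := rfl
    rw [sol_E_const S ju jv ht, he] at h2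
    rw [he] at h1
    have h3 : 2 / (3 * √a) * a ^ (3 / 2 : ℝ) = 2 / 3 * a := by
      rcases hpos.eq_or_lt with h0 | h0
      · rw [← h0, Real.zero_rpow (by norm_num)]; simp
      · have : a ^ (3 / 2 : ℝ) = a * √a := by
          rw [show (3 / 2 : ℝ) = 1 + 1 / 2 by norm_num, Real.rpow_add h0, Real.rpow_one,
            Real.sqrt_eq_rpow]
        rw [this]
        have : 0 < √a := Real.sqrt_pos.2 h0
        field_simp
    rw [h3] at h1
    linarith
  have hgt := trap (fun t => Hen (1 / 2) (u t) (v t)) a (sol_H_cont S.hu S.hv ju jv) hH hne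
  refine virial_absurd (fun t => (∫ x, vden u v t x).re) (fun t => -2 * (∫ x, kden u v t x).re)
    (fun t => -2 * (2 * Hen (1 / 2) (u t) (v t) - 6 * Een (1 / 2) (u t) (v t)))
    (12 * (Een (1 / 2) (W1 (1 / 2)) (W2 (1 / 2)) - Een (1 / 2) (u 0) (v 0))) (by linarith)
    (fun t _ => vden_nonneg t) ?_ ?_ ?_
  · intro t ht
    have := re_hasDerivAt (S.hd_vden ht)
    rw [S.int_vden' ht.le] at this
    simpa using this
  · intro t ht
    have := (re_hasDerivAt (S.hd_kden ht)).const_mul (-2)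
    rw [S.int_kden' ht.le, ← hen_eq S.hu S.hv ht.le, ← een_eq S.hu S.hv ht.le] at this
    simpa using this
  · intro t ht
    have := hgt t ht.le
    have h2 := sol_E_const S ju jv ht.le
    change -2 * (2 * Hen (1 / 2) (u t) (v t) - 6 * Een (1 / 2) (u t) (v t)) ≤ _
    rw [h2]
    linarith

def rr (x : E6) : ℝ := 1 + ‖x‖ ^ 2 / 24

lemma rr_ge (x : E6) : 1 ≤ rr x := by unfold rr; nlinarith [sq_nonneg ‖x‖]

lemma rr_pos (x : E6) : 0 < rr x := lt_of_lt_of_le one_pos (rr_ge x)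

lemma rr_bd (x : E6) : (1 + ‖x‖) ^ 2 ≤ 48 * rr x := by
  unfold rr; nlinarith [sq_nonneg (1 - ‖x‖), sq_nonneg ‖x‖]

lemma rr_cont : Continuous rr := by unfold rr; fun_prop

lemma rr_hasFDerivAt (x : E6) : HasFDerivAt rr ((1 / 12 : ℝ) • innerSL ℝ x) x := by
  have h := (hasStrictFDerivAt_norm_sq (F := E6) x).hasFDerivAt
  have h2 := (h.const_mul (1 / 24 : ℝ)).const_add 1
  refine (h2.congr_fderiv ?_).congr_of_eventuallyEq (Eventually.of_forall fun y => ?_)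
  · ext y
    simp
    ring
  · simp [rr]; ring

lemma inner_single (x : E6) (j : Fin 6) : inner ℝ x (EuclideanSpace.single j (1 : ℝ)) = x j := by
  rw [EuclideanSpace.inner_single_right]; simp

lemma rr_pow_hasFDerivAt (n : ℕ) (x : E6) :
    HasFDerivAt (fun y => (rr y ^ n)⁻¹)
      ((-(n * rr x ^ (n - 1)) / (rr x ^ n) ^ 2) • ((1 / 12 : ℝ) • innerSL ℝ x)) x := by
  have h := (hasDerivAt_pow n (rr x)).inv (pow_ne_zero n (rr_pos x).ne')
  exact h.comp_hasFDerivAt x (rr_hasFDerivAt x)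

lemma rr_dom {f : E6 → ℝ} (hf : Continuous f) (C : ℝ)
    (h : ∀ x, |f x| * (1 + ‖x‖) ^ 7 ≤ C) : Integrable f := by
  refine (int_bd C).mono' hf.aestronglyMeasurable (Eventually.of_forall fun x => ?_)
  have hp : 0 < 1 + ‖x‖ := by positivity
  rw [Real.rpow_neg hp.le, ← div_eq_mul_inv, le_div_iff₀ (by positivity)]
  have := h x
  rw [Real.norm_eq_abs]
  exact_mod_cast this

lemma rr_mono (m : ℕ) (hm : m ≤ 10) (x : E6) : (1 + ‖x‖) ^ m ≤ 48 ^ 5 * rr x ^ 5 := by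
  calc (1 + ‖x‖) ^ m ≤ (1 + ‖x‖) ^ 10 := pow_le_pow_right₀ (by linarith [norm_nonneg x]) hm
    _ = ((1 + ‖x‖) ^ 2) ^ 5 := by ring
    _ ≤ (48 * rr x) ^ 5 := pow_le_pow_left₀ (by positivity) (rr_bd x) 5
    _ = _ := by ring

lemma coord_le (x : E6) (j : Fin 6) : |x j| ≤ ‖x‖ := by
  simpa using PiLp.norm_apply_le x j

lemma coord_sq (x : E6) (j : Fin 6) : x j ^ 2 ≤ 24 * rr x := by
  have := coord_le x j
  have h2 : x j ^ 2 ≤ ‖x‖ ^ 2 := by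
    rw [← sq_abs]; exact pow_le_pow_left₀ (abs_nonneg _) this 2
  unfold rr; linarith

lemma rr_inv_cont (n : ℕ) : Continuous fun x => (rr x ^ n)⁻¹ :=
  (rr_cont.pow n).inv₀ fun x => (pow_pos (rr_pos x) n).ne'

lemma coord_cont (j : Fin 6) : Continuous fun x : E6 => x j := by fun_prop

def dG (j : Fin 6) (x : E6) : ℝ := (rr x ^ 5)⁻¹ - 5 / 12 * x j ^ 2 * (rr x ^ 6)⁻¹

lemma int_dG (j : Fin 6) : Integrable (dG j) := by
  refine rr_dom (((rr_inv_cont 5)).sub ((continuous_const.mul ((coord_cont j).pow 2)).mul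
    (rr_inv_cont 6))) (11 * 48 ^ 5) fun x => ?_
  have hp := rr_pos x
  have h1 : |dG j x| ≤ 11 * (rr x ^ 5)⁻¹ := by
    have e : (rr x ^ 6)⁻¹ = (rr x ^ 5)⁻¹ * (rr x)⁻¹ := by rw [pow_succ, mul_inv]
    have h0 : 0 < (rr x ^ 5)⁻¹ := by positivity
    have h2 : x j ^ 2 * (rr x)⁻¹ ≤ 24 := by
      rw [← div_eq_mul_inv, div_le_iff₀ hp]; exact coord_sq x j
    have h3 : 0 ≤ x j ^ 2 * (rr x)⁻¹ := by positivity
    unfold dG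
    rw [e, abs_le]
    constructor <;> nlinarith [mul_nonneg h0.le h3, mul_le_mul_of_nonneg_left h2 h0.le]
  have h2 := rr_mono 7 (by norm_num) x
  calc |dG j x| * (1 + ‖x‖) ^ 7 ≤ (11 * (rr x ^ 5)⁻¹) * (48 ^ 5 * rr x ^ 5) := by gcongr
    _ = 11 * 48 ^ 5 := by field_simp

lemma hasF_dG (j : Fin 6) (x : E6) : ∃ L : E6 →L[ℝ] ℝ,
    HasFDerivAt (fun y : E6 => y j * (rr y ^ 5)⁻¹) L x ∧ L (EuclideanSpace.single j 1) = dG j x := by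
  have h1 : HasFDerivAt (fun y : E6 => y j) (EuclideanSpace.proj j : E6 →L[ℝ] ℝ) x :=
    (EuclideanSpace.proj j : E6 →L[ℝ] ℝ).hasFDerivAt
  refine ⟨_, h1.mul (rr_pow_hasFDerivAt 5 x), ?_⟩
  have hp := (rr_pos x).ne'
  simp [dG, inner_single]
  field_simp
  ring

lemma int_dG_zero (j : Fin 6) : ∫ x, dG j x = 0 := by
  have hf : ∀ x, fderiv ℝ (fun y : E6 => y j * (rr y ^ 5)⁻¹) x (EuclideanSpace.single j 1)
      = dG j x := fun x => by
    obtain ⟨L, h1, h2⟩ := hasF_dG j x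
    rw [h1.fderiv, h2]
  have iF : Integrable (fun y : E6 => y j * (rr y ^ 5)⁻¹) := by
    refine rr_dom ((coord_cont j).mul (rr_inv_cont 5)) (48 ^ 5) fun x => ?_
    have hp := rr_pos x
    have h2 := rr_mono 8 (by norm_num) x
    have h3 : |x j| ≤ 1 + ‖x‖ := by linarith [coord_le x j]
    rw [abs_mul, abs_of_pos (show 0 < (rr x ^ 5)⁻¹ by positivity)]
    calc |x j| * (rr x ^ 5)⁻¹ * (1 + ‖x‖) ^ 7 ≤ (1 + ‖x‖) * (rr x ^ 5)⁻¹ * (1 + ‖x‖) ^ 7 := by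
          gcongr
      _ = (rr x ^ 5)⁻¹ * (1 + ‖x‖) ^ 8 := by ring
      _ ≤ (rr x ^ 5)⁻¹ * (48 ^ 5 * rr x ^ 5) := by gcongr
      _ = 48 ^ 5 := by field_simp
  have h := integral_mul_fderiv_eq_neg_fderiv_mul_of_integrable (μ := (volume : Measure E6))
    (f := fun _ : E6 => (1 : ℝ)) (g := fun y : E6 => y j * (rr y ^ 5)⁻¹)
    (v := EuclideanSpace.single j (1 : ℝ))
    (by simp) (by simp only [hf, one_mul]; exact int_dG j) (by simpa using iF)
    (fun x _ => by fun_prop) (fun x _ => by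
      obtain ⟨L, h1, h2⟩ := hasF_dG j x
      exact h1.differentiableAt)
  simpa [hf] using h

lemma norm_sum (x : E6) : ‖x‖ ^ 2 = ∑ j, x j ^ 2 := by
  rw [EuclideanSpace.norm_sq_eq]; simp

lemma rr_int6 : Integrable fun x => (rr x ^ 6)⁻¹ := by
  refine rr_dom (rr_inv_cont 6) (48 ^ 5) fun x => ?_
  have hp := rr_pos x
  rw [abs_of_pos (show 0 < (rr x ^ 6)⁻¹ by positivity)]
  calc (rr x ^ 6)⁻¹ * (1 + ‖x‖) ^ 7 ≤ (rr x ^ 5)⁻¹ * (48 ^ 5 * rr x ^ 5) := by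
        gcongr
        · exact rr_ge x
        · norm_num
        · exact rr_mono 7 (by norm_num) x
    _ = 48 ^ 5 := by field_simp

lemma AB : ∫ x : E6, ‖x‖ ^ 2 / 36 * (rr x ^ 6)⁻¹ = ∫ x : E6, (rr x ^ 6)⁻¹ := by
  have e : ∀ x : E6, ‖x‖ ^ 2 / 36 * (rr x ^ 6)⁻¹ = (rr x ^ 6)⁻¹ - (1 / 6) * ∑ j, dG j x := by
    intro x
    have hp := (rr_pos x).ne'
    have : ∑ j, dG j x = 6 * (rr x ^ 5)⁻¹ - 5 / 12 * ‖x‖ ^ 2 * (rr x ^ 6)⁻¹ := by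
      unfold dG
      rw [Finset.sum_sub_distrib, norm_sum, Finset.mul_sum, Finset.sum_mul]
      simp
    rw [this]
    have e5 : (rr x ^ 5)⁻¹ = rr x * (rr x ^ 6)⁻¹ := by field_simp
    rw [e5]
    have : ‖x‖ ^ 2 = 24 * (rr x - 1) := by unfold rr; ring
    rw [this]; ring
  simp_rw [e]
  rw [integral_sub rr_int6 ((integrable_finsetSum _ fun j _ => int_dG j).const_mul _),
    integral_const_mul, integral_finsetSum _ fun j _ => int_dG j]
  simp [int_dG_zero]

lemma W2_eq : W2 (1 / 2) = fun x => (((rr x ^ 2)⁻¹ : ℝ) : ℂ) := by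
  funext x
  have : √(1 / 2 : ℝ) ≠ 0 := (Real.sqrt_pos.2 (by norm_num)).ne'
  unfold W2 phi0 rr
  rw [mul_div_cancel_left₀ _ this]

lemma W1_eq : W1 (1 / 2) = fun x => ((√(1 / 2) * (rr x ^ 2)⁻¹ : ℝ) : ℂ) := rfl

lemma grad_c (c : ℝ) (x : E6) :
    gradNormSq (fun x => ((c * (rr x ^ 2)⁻¹ : ℝ) : ℂ)) x = c ^ 2 * (‖x‖ ^ 2 / 36 * (rr x ^ 6)⁻¹) := by
  have hp := (rr_pos x).ne'
  have h : ∀ j, pd (fun x => ((c * (rr x ^ 2)⁻¹ : ℝ) : ℂ)) j x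
      = ((c * (-(x j / 6) * (rr x ^ 3)⁻¹) : ℝ) : ℂ) := by
    intro j
    have h1 := Complex.ofRealCLM.hasFDerivAt.comp x ((rr_pow_hasFDerivAt 2 x).const_mul c)
    unfold pd
    rw [show fderiv ℝ (fun x => ((c * (rr x ^ 2)⁻¹ : ℝ) : ℂ)) x = _ from h1.fderiv]
    simp [inner_single]
    field_simp
    ring
  unfold gradNormSq
  simp_rw [h, Complex.norm_real, Real.norm_eq_abs, sq_abs]
  rw [norm_sum, Finset.sum_div, Finset.sum_mul, Finset.mul_sum]
  refine Finset.sum_congr rfl fun j _ => ?_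
  field_simp
  ring

lemma ground : Een (1 / 2) (W1 (1 / 2)) (W2 (1 / 2))
      = (1 / 3) * Hen (1 / 2) (W1 (1 / 2)) (W2 (1 / 2)) := by
  have hs : √(1 / 2 : ℝ) ^ 2 = 1 / 2 := Real.sq_sqrt (by norm_num)
  have hR : Ren (W1 (1 / 2)) (W2 (1 / 2)) = (1 / 2) * ∫ x : E6, (rr x ^ 6)⁻¹ := by
    unfold Ren
    rw [W1_eq, W2_eq]
    have : ∀ x : E6, conj (((rr x ^ 2)⁻¹ : ℝ) : ℂ) * ((√(1 / 2) * (rr x ^ 2)⁻¹ : ℝ) : ℂ) ^ 2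
        = (((1 / 2) * (rr x ^ 6)⁻¹ : ℝ) : ℂ) := by
      intro x
      have hp := (rr_pos x).ne'
      rw [Complex.conj_ofReal, ← Complex.ofReal_pow, ← Complex.ofReal_mul, mul_pow, hs]
      congr 1
      field_simp
    simp_rw [this]
    rw [integral_complex_ofReal, Complex.ofReal_re, integral_const_mul]
  have hH : Hen (1 / 2) (W1 (1 / 2)) (W2 (1 / 2)) = (3 / 4) * ∫ x : E6, (rr x ^ 6)⁻¹ := by
    unfold Hen
    have e2 : W2 (1 / 2) = fun x => ((1 * (rr x ^ 2)⁻¹ : ℝ) : ℂ) := by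
      rw [W2_eq]; simp
    rw [W1_eq, e2]
    simp_rw [grad_c]
    rw [integral_const_mul, integral_const_mul, AB, hs]
    ring
  unfold Een
  rw [hR, hH]; ring

/-- blow-up above the ground state in the mass-resonance case `κ = 1/2`.
Assuming the sharp Gagliardo–Nirenberg inequality for all Schwartz pairs, there is no
classical solution of the quadratic NLS system defined on all of `[0, ∞)` whose initial
data satisfies `E(u₀,v₀) < E(W)` and `H(u₀,v₀) > H(W)`. -/
theorem blowup_above_ground_state
    (hGN : ∀ u v : E6 → ℂ, IsSchwartz u → IsSchwartz v →
      Ren u v ≤ (2 / (3 * Real.sqrt (Hen (1 / 2) (W1 (1 / 2)) (W2 (1 / 2)))))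
        * (Hen (1 / 2) u v) ^ (3 / 2 : ℝ)) :
    ¬ ∃ u v : ℝ → E6 → ℂ,
      IsClassicalSol (1 / 2) (Set.Ici (0 : ℝ)) u v ∧
      Een (1 / 2) (u 0) (v 0) < Een (1 / 2) (W1 (1 / 2)) (W2 (1 / 2)) ∧
      Hen (1 / 2) (u 0) (v 0) > Hen (1 / 2) (W1 (1 / 2)) (W2 (1 / 2)) := by
  rintro ⟨u, v, h, hE, hH⟩
  exact main_of_ground ground hGN u v h hE hH
end
end
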